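/- arXiv:0709.0564 — 2 statements merged into one kernel-verified Lean document; each statement's English description precedes it below -/
import Mathlib

section
/- Let Γ be a distance-regular graph with classical parameters (D, b, α, β), D ≥ 4, and intersection numbers a₁ = 0 and a₂ ≠ 0. Fix vertices x, y with ∂(x,y) = 3, set C = {z ∈ Γ₃(x) : B(x,z) = B(x,y)} and Δ = [x,C] = {v ∈ X : ∃ z ∈ C with ∂(x,v)+∂(v,z)=∂(x,z)}. Then B(x,y) ∩ Δ = ∅ and Γ₁(x) ∩ Δ = C(x,y) ∪ A(x,y); in particular |Γ₁(x) ∩ Δ| = a₃ + c₃. -/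
/-!
Common definitions: distance-regular graphs (via an intersection-number function `p`),
classical parameters, and the sets `B(x,y)`, `A(x,y)`, `C(x,y)`.
The distance `∂` is `SimpleGraph.dist`.
-/

variable {V : Type*}

/-- `Γ` is distance-regular with intersection numbers `p h i j = p^h_{ij}`
(for indices up to the diameter `D`). -/
def SimpleGraph.IsDistRegularWith (G : SimpleGraph V) (D : ℕ) (p : ℕ → ℕ → ℕ → ℕ) : Prop :=
  ∀ h i j : ℕ, h ≤ D → i ≤ D → j ≤ D → ∀ x y : V, G.dist x y = h →
    {z : V | G.dist x z = i ∧ G.dist y z = j}.ncard = p h i j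

/-- The Gaussian bracket `[i] = 1 + b + b² + ⋯ + b^{i-1}`. -/
def gaussBracket (b : ℝ) (i : ℕ) : ℝ := ∑ k ∈ Finset.range i, b ^ k

/-- A distance-regular graph with intersection numbers `p` has classical parameters
`(D, b, α, β)`: `b ∉ {0, -1}`, `c_i = [i](1 + α[i-1])` and `b_i = ([D]-[i])(β - α[i])`
for `0 ≤ i ≤ D`, where `c_i = p^i_{1,i-1}` and `b_i = p^i_{1,i+1}`. -/
def HasClassicalParams (D : ℕ) (p : ℕ → ℕ → ℕ → ℕ) (b α β : ℝ) : Prop :=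
  b ≠ 0 ∧ b ≠ -1 ∧
    (∀ i ≤ D, (p i 1 (i - 1) : ℝ) = gaussBracket b i * (1 + α * gaussBracket b (i - 1))) ∧
    (∀ i ≤ D, (p i 1 (i + 1) : ℝ) =
      (gaussBracket b D - gaussBracket b i) * (β - α * gaussBracket b i))

/-- `B(x,y) = Γ₁(x) ∩ Γ_{∂(x,y)+1}(y)`. -/
def Bset (G : SimpleGraph V) (x y : V) : Set V :=
  {v | G.dist x v = 1 ∧ G.dist y v = G.dist x y + 1}

/-- `A(x,y) = Γ₁(x) ∩ Γ_{∂(x,y)}(y)`. -/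
def Aset (G : SimpleGraph V) (x y : V) : Set V :=
  {v | G.dist x v = 1 ∧ G.dist y v = G.dist x y}

/-- `C(x,y) = Γ₁(x) ∩ Γ_{∂(x,y)-1}(y)`. -/
def Cset (G : SimpleGraph V) (x y : V) : Set V :=
  {v | G.dist x v = 1 ∧ G.dist y v = G.dist x y - 1}

/-- `C = {z ∈ Γ₃(x) : B(x,z) = B(x,y)}`. -/
def Cclass (G : SimpleGraph V) (x y : V) : Set V :=
  {z | G.dist x z = 3 ∧ Bset G x z = Bset G x y}

/-- `Δ = [x, C] = {v : ∃ z ∈ C, ∂(x,v) + ∂(v,z) = ∂(x,z)}`. -/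
def Delta (G : SimpleGraph V) (x y : V) : Set V :=
  {v | ∃ z ∈ Cclass G x y, G.dist x v + G.dist v z = G.dist x z}

noncomputable def cX (b α X : ℝ) : ℝ := (X-1)/(b-1) * (1 + α * ((X * b⁻¹ - 1)/(b-1)))
noncomputable def bX (b α β s X : ℝ) : ℝ := (s - (X-1)/(b-1)) * (β - α * ((X-1)/(b-1)))
noncomputable def aX (b α β s X : ℝ) : ℝ := s*β - bX b α β s X - cX b α X
noncomputable def B0 (b α β s : ℝ) : ℝ := (s + 1/(b-1)) * (β + α/(b-1))
noncomputable def B1 (b α β s : ℝ) : ℝ := -(1/(b-1)) * (β + α/(b-1)) - (s+1/(b-1))*(α/(b-1))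
noncomputable def C0 (b α : ℝ) : ℝ := -(1/(b-1)) * (1 - α/(b-1))
noncomputable def C1 (b α : ℝ) : ℝ := (1/(b-1)) * (1 - α/(b-1) - α/(b-1)*b⁻¹)
noncomputable def A0 (b α β s : ℝ) : ℝ := s*β - B0 b α β s - C0 b α
noncomputable def A1 (b α β s : ℝ) : ℝ := - B1 b α β s - C1 b α
noncomputable def mm (b : ℝ) : ℝ := 2 - b - b⁻¹
noncomputable def rho (b α β s : ℝ) : ℝ := B0 b α β s * C0 b α * (2 - b^2 - b⁻¹^2) - mm b * (A0 b α β s)^2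
noncomputable def eta (b α β s : ℝ) : ℝ := (1-b^2)*(B0 b α β s * C1 b α + B1 b α β s * C0 b α * b⁻¹)
  + (1-b⁻¹^2)*(B0 b α β s * C1 b α * b + B1 b α β s * C0 b α) - mm b * A0 b α β s * A1 b α β s

lemma e1 (b α β s X : ℝ) (hb : b ≠ 0) (hb1 : b ≠ 1) (hX : X ≠ 0) :
   (aX b α β s X + aX b α β s (X*b)) * (X⁻¹ + X⁻¹*b⁻¹) - (b+b⁻¹)*(aX b α β s X * X⁻¹ + aX b α β s (X*b) * (X⁻¹*b⁻¹))
    - (mm b * A0 b α β s) * (X⁻¹ + X⁻¹*b⁻¹) - mm b * A1 b α β s = 0 := by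
  have : b - 1 ≠ 0 := sub_ne_zero.2 hb1
  simp only [mm, A0, A1, aX, bX, cX, B0, B1, C0, C1]
  field_simp
  ring

lemma e2 (b α β s X : ℝ) (hb : b ≠ 0) (hb1 : b ≠ 1) (hX : X ≠ 0) :
   2*X⁻¹*(bX b α β s (X*b⁻¹) * cX b α X + (aX b α β s X)^2 + bX b α β s X * cX b α (X*b))
   - (b+b⁻¹)*(bX b α β s (X*b⁻¹) * cX b α X * (X⁻¹*b) + (aX b α β s X)^2 * X⁻¹ + bX b α β s X * cX b α (X*b) * (X⁻¹*b⁻¹))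
   - 2 * (mm b * A0 b α β s) * aX b α β s X * X⁻¹ - rho b α β s * X⁻¹ - mm b * A1 b α β s * aX b α β s X - eta b α β s = 0 := by
  have : b - 1 ≠ 0 := sub_ne_zero.2 hb1
  simp only [rho, eta, mm, A0, A1, aX, bX, cX, B0, B1, C0, C1]
  field_simp
  ring

lemma eig (b α β s X : ℝ) (hb : b ≠ 0) (hb1 : b ≠ 1) (hX : X ≠ 0) :
   cX b α X * (X⁻¹*b) + aX b α β s X * X⁻¹ + bX b α β s X * (X⁻¹*b⁻¹) = 
    (s*β + C0 b α * (b-1) + B0 b α β s * (b⁻¹-1)) * X⁻¹ + (C1 b α * (b-1) + B1 b α β s * (b⁻¹-1)) := by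
  have : b - 1 ≠ 0 := sub_ne_zero.2 hb1
  simp only [aX, bX, cX, B0, B1, C0, C1]
  field_simp
  ring

lemma kth (b α β s : ℝ) (hb : b ≠ 0) (hb1 : b ≠ 1) :
   -(C0 b α * (b-1) + B0 b α β s * (b⁻¹-1)) = bX b α β s 1 - bX b α β s b * b⁻¹ + 1 := by
  have : b - 1 ≠ 0 := sub_ne_zero.2 hb1
  simp only [aX, bX, cX, B0, B1, C0, C1]
  field_simp
  ring

noncomputable def Lop (b α β s : ℝ) (g : ℤ → ℝ) (i : ℤ) : ℝ :=
  cX b α (b^i) * g (i-1) + aX b α β s (b^i) * g i + bX b α β s (b^i) * g (i+1)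
noncomputable def Sop (b : ℝ) (g : ℤ → ℝ) (i : ℤ) : ℝ := (b^i)⁻¹ * g i

lemma AW (b α β s : ℝ) (hb : b ≠ 0) (hb1 : b ≠ 1) (g : ℤ → ℝ) (i : ℤ) :
   Lop b α β s (Lop b α β s (Sop b g)) i - (b+b⁻¹) * Lop b α β s (Sop b (Lop b α β s g)) i
   + Sop b (Lop b α β s (Lop b α β s g)) i - (mm b * A0 b α β s) * (Lop b α β s (Sop b g) i + Sop b (Lop b α β s g) i) - rho b α β s * Sop b g i
   = mm b * A1 b α β s * Lop b α β s g i + eta b α β s * g i := by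
  have hX : b^i ≠ 0 := zpow_ne_zero _ hb
  have h1 : b^(i+1) = b^i * b := zpow_add_one₀ hb i
  have h2 : b^(i-1) = b^i * b⁻¹ := zpow_sub_one₀ hb i
  have h3 : b^(i+1+1) = b^i * b * b := by rw [zpow_add_one₀ hb, h1]
  have h4 : b^(i-1-1) = b^i * b⁻¹ * b⁻¹ := by rw [zpow_sub_one₀ hb, h2]
  have hbb : b * b⁻¹ = 1 := mul_inv_cancel₀ hb
  simp only [Lop, Sop, add_sub_cancel_right, sub_add_cancel, h1, h2, h3, h4]
  generalize b^i = X at *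
  have E1 := e1 b α β s X hb hb1 hX
  have E1' := e1 b α β s (X*b⁻¹) hb hb1 (mul_ne_zero hX (inv_ne_zero hb))
  have E2 := e2 b α β s X hb hb1 hX
  rw [inv_mul_cancel_right₀ hb] at E1'
  simp only [mul_inv, inv_inv] at *
  rw [mul_inv_cancel_right₀ hb] at E1'
  generalize b⁻¹ = bi at *
  generalize X⁻¹ = Y at *
  generalize aX b α β s X = a0 at *
  generalize aX b α β s (X*b) = a1 at *
  generalize aX b α β s (X*bi) = a2 at *
  generalize bX b α β s X = b0 at *
  generalize bX b α β s (X*b) = b1 at *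
  generalize bX b α β s (X*bi) = b2 at *
  generalize cX b α X = c0 at *
  generalize cX b α (X*b) = c1 at *
  generalize cX b α (X*bi) = c2 at *
  linear_combination b0 * g (i+1) * E1 + c0 * g (i-1) * E1' + g i * E2 + (-Y * b0*b1*g (i+1+1) - Y*c0*c2*g (i-1-1)) * hbb 

open Matrix in
lemma principleP {V ι : Type*} [Fintype V] [DecidableEq V] [Fintype ι] (W : Matrix V V ℝ) (hWs : ∀ u v, W u v = W v u)
    (t κ : ℝ) (ht : t ≠ 0) (hW2 : ∀ u v, t * ∑ w, W u w * W w v = κ * W u v)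
    (P Q : ι → Matrix V V ℝ) (hP : ∀ k u v, P k u v = P k v u) (hQ : ∀ k u v, Q k u v = Q k v u)
    (N : V → Matrix V V ℝ)
    (hN : ∀ x, N x = ∑ k, P k * diagonal (W x) * Q k)
    (hNQ : ∀ x k y, (N x * Q k) y x = 0) (x : V) : N x = 0 := by
  set F : V → V → V → ℝ := fun y z w => ∑ k, P k y w * Q k w z with hF
  have hNF : ∀ x y z, N x y z = ∑ w, W x w * F y z w := by
    intro x y z
    rw [hN, Matrix.sum_apply]
    simp only [hF, Finset.mul_sum]
    rw [Finset.sum_comm]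
    refine Finset.sum_congr rfl fun k _ => ?_
    rw [Matrix.mul_apply]
    refine Finset.sum_congr rfl fun w _ => ?_
    rw [Matrix.mul_diagonal]; ring
  have hsq : ∀ y z, t * ∑ x, N x y z ^ 2 = κ * ∑ w, F y z w * N w y z := by
    intro y z
    have : ∀ x, N x y z ^ 2 = ∑ w, ∑ w', (W w x * W x w') * (F y z w * F y z w') := by
      intro x
      rw [hNF, sq, Finset.sum_mul_sum]
      refine Finset.sum_congr rfl fun w _ => Finset.sum_congr rfl fun w' _ => ?_
      rw [hWs x w]; ring
    simp_rw [this]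
    rw [Finset.sum_comm]
    simp_rw [hNF, Finset.mul_sum]
    refine Finset.sum_congr rfl fun w _ => ?_
    rw [Finset.sum_comm]
    refine Finset.sum_congr rfl fun w' _ => ?_
    rw [← Finset.mul_sum, ← Finset.sum_mul, ← mul_assoc, hW2]; ring
  have h1 : ∀ w, ∑ y, ∑ z, F y z w * N w y z = 0 := by
    intro w
    calc ∑ y, ∑ z, F y z w * N w y z = ∑ y, ∑ z, ∑ k, P k y w * (N w y z * Q k z w) := by
          refine Finset.sum_congr rfl fun y _ => Finset.sum_congr rfl fun z _ => ?_
          simp only [hF, Finset.sum_mul]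
          refine Finset.sum_congr rfl fun k _ => ?_
          rw [hQ k w z]; ring
      _ = ∑ y, ∑ k, P k y w * (N w * Q k) y w := by
          refine Finset.sum_congr rfl fun y _ => ?_
          rw [Finset.sum_comm]
          refine Finset.sum_congr rfl fun k _ => ?_
          rw [Matrix.mul_apply, Finset.mul_sum]
      _ = 0 := by simp [hNQ]
  have htot : t * ∑ y, ∑ z, ∑ x, N x y z ^ 2 = 0 := by
    have h2 : ∑ y, ∑ z, ∑ w, F y z w * N w y z = ∑ w, ∑ y, ∑ z, F y z w * N w y z := by
      rw [Finset.sum_comm (s := (Finset.univ : Finset V)) (t := (Finset.univ : Finset V)) (f := fun w y => ∑ z, F y z w * N w y z)]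
      refine Finset.sum_congr rfl fun y _ => ?_
      rw [Finset.sum_comm]
    simp_rw [Finset.mul_sum _ _ t]
    calc _ = ∑ y, ∑ z, κ * ∑ w, F y z w * N w y z := by
          refine Finset.sum_congr rfl fun y _ => Finset.sum_congr rfl fun z _ => ?_
          rw [← hsq, Finset.mul_sum]
      _ = κ * ∑ y, ∑ z, ∑ w, F y z w * N w y z := by simp_rw [← Finset.mul_sum]
      _ = 0 := by rw [h2]; simp [h1]
  have h3 := (mul_eq_zero.1 htot).resolve_left ht
  ext y z
  rw [Finset.sum_eq_zero_iff_of_nonneg (fun _ _ => Finset.sum_nonneg fun _ _ => Finset.sum_nonneg fun _ _ => sq_nonneg _)] at h3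
  have h4 := h3 y (Finset.mem_univ _)
  rw [Finset.sum_eq_zero_iff_of_nonneg (fun _ _ => Finset.sum_nonneg fun _ _ => sq_nonneg _)] at h4
  have h5 := h4 z (Finset.mem_univ _)
  rw [Finset.sum_eq_zero_iff_of_nonneg (fun _ _ => sq_nonneg _)] at h5
  simpa using h5 x (Finset.mem_univ _)

open Matrix in
lemma TDfull {V : Type*} [Fintype V] [DecidableEq V] (A : Matrix V V ℝ) (hAs : Aᵀ = A) (d : V → V → ℕ)
    (hdc : ∀ u v, d u v = d v u) (hd0 : ∀ u v, d u v = 0 ↔ u = v)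
    (b α β s : ℝ) (hb : b ≠ 0) (hb1 : b ≠ 1)
    (hA : ∀ u (g : ℤ → ℝ), A *ᵥ (fun v => g (d u v)) = fun v => Lop b α β s g (d u v))
    (ξ ζ t κ : ℝ) (hζ : ζ ≠ 0) (ht : t ≠ 0)
    (hW2 : ∀ u v, t * ∑ w, (ξ + ζ * (b^(d u w : ℤ))⁻¹) * (ξ + ζ * (b^(d w v : ℤ))⁻¹) = κ * (ξ + ζ * (b^(d u v : ℤ))⁻¹))
    (S : V → Matrix V V ℝ) (hS : ∀ x, S x = diagonal (fun v => (b^(d x v : ℤ))⁻¹)) :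
    ∃ γ ρ : ℝ, ∀ x, A*A*A*S x - S x*A*A*A - (b+b⁻¹+1) • (A*A*S x*A - A*S x*A*A) - γ • (A*A*S x - S x*A*A) - ρ • (A*S x-S x*A) = 0 := by
  refine ⟨mm b * A0 b α β s, rho b α β s, ?_⟩
  set γ := mm b * A0 b α β s with hγ
  set ρ := rho b α β s with hρ
  set T : Matrix V V ℝ → Matrix V V ℝ := fun B => A*A*A*B - B*A*A*A - (b+b⁻¹+1) • (A*A*B*A - A*B*A*A) - γ • (A*A*B - B*A*A) - ρ • (A*B-B*A) with hT
  have hrad : ∀ u (g : ℤ → ℝ), T (S u) *ᵥ (fun v => g (d u v)) = 0 := by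
    intro u
    have hSr : ∀ (g : ℤ → ℝ), S u *ᵥ (fun v => g (d u v)) = fun v => Sop b g (d u v) := by
      intro g; ext v; rw [hS, mulVec_diagonal]; rfl
    set Y := A*A*S u - (b+b⁻¹) • (A*S u*A) + S u*A*A - γ • (A*S u+S u*A) - ρ • S u with hY
    have hTY : T (S u) = A*Y - Y*A := by
      simp only [hT, hY, Matrix.mul_add, Matrix.mul_sub, Matrix.add_mul, Matrix.sub_mul, Matrix.mul_smul, Matrix.smul_mul, smul_add, smul_sub, add_smul, one_smul, Matrix.mul_assoc]
      abel
    have hYr : ∀ g : ℤ → ℝ, Y *ᵥ (fun v => g (d u v)) = fun v => mm b * A1 b α β s * Lop b α β s g (d u v) + eta b α β s * g (d u v) := by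
      intro g
      simp only [hY, sub_mulVec, add_mulVec, smul_mulVec, ← mulVec_mulVec, hA, hSr]
      ext v
      simp only [Pi.sub_apply, Pi.add_apply, Pi.smul_apply, smul_eq_mul]
      exact AW b α β s hb hb1 g (d u v)
    intro g
    rw [hTY, sub_mulVec, ← mulVec_mulVec, ← mulVec_mulVec, hA, hYr, hYr]
    rw [hA u (fun i => mm b * A1 b α β s * Lop b α β s g i + eta b α β s * g i), sub_eq_zero]
    ext v
    simp only [Lop]; ring
  set W : Matrix V V ℝ := fun u v => ξ + ζ * (b^(d u v : ℤ))⁻¹ with hW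
  have hdW : ∀ x, diagonal (W x) = ξ • (1 : Matrix V V ℝ) + ζ • S x := by
    intro x; ext i j
    by_cases h : i = j
    · subst h; simp [hW, hS]
    · simp [hS, h]
  have hTW : ∀ x, T (diagonal (W x)) = ζ • T (S x) := by
    intro x
    rw [hdW]
    simp only [hT, Matrix.mul_add, Matrix.add_mul, Matrix.mul_smul, Matrix.smul_mul, Matrix.mul_one, Matrix.one_mul]
    module
  let P : Fin 8 → Matrix V V ℝ := ![A*A*A, 1, A*A, A, A*A, 1, A, 1]
  let Q : Fin 8 → Matrix V V ℝ := ![1, (-1 : ℝ) • (A*A*A), (-(b+b⁻¹+1)) • A, (b+b⁻¹+1) • (A*A), (-γ) • 1, γ • (A*A), (-ρ) • 1, ρ • A]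
  have hsy : ∀ M : Matrix V V ℝ, Mᵀ = M → ∀ u v, M u v = M v u := by
    intro M hM u v
    conv_lhs => rw [← hM]
    rfl
  have hQc : ∀ x k, ∃ g : ℤ → ℝ, Q k *ᵥ (Pi.single x 1) = fun v => g (d x v) := by
    intro x
    have h0 : (Pi.single x (1:ℝ) : V → ℝ) = fun v => (fun i : ℤ => if i = 0 then (1:ℝ) else 0) (d x v) := by
      ext v
      by_cases h : x = v
      · subst h; simp [(hd0 x x).2 rfl]
      · have : d x v ≠ 0 := fun h' => h ((hd0 _ _).1 h')
        simp [this, Pi.single_apply, Ne.symm h]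
    rw [h0]
    have hA1 := hA x (fun i : ℤ => if i = 0 then (1:ℝ) else 0)
    have hA2 := hA x (Lop b α β s (fun i : ℤ => if i = 0 then (1:ℝ) else 0))
    have hA3 := hA x (Lop b α β s (Lop b α β s (fun i : ℤ => if i = 0 then (1:ℝ) else 0)))
    have c0 : ∀ c : ℝ, ∃ g : ℤ → ℝ, (c • (1 : Matrix V V ℝ)) *ᵥ (fun v => (fun i : ℤ => if i = 0 then (1:ℝ) else 0) (d x v)) = fun v => g (d x v) := by
      intro c
      refine ⟨fun i => c * (fun i : ℤ => if i = 0 then (1:ℝ) else 0) i, ?_⟩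
      rw [smul_mulVec, one_mulVec]; rfl
    have c1 : ∀ c : ℝ, ∃ g : ℤ → ℝ, (c • A) *ᵥ (fun v => (fun i : ℤ => if i = 0 then (1:ℝ) else 0) (d x v)) = fun v => g (d x v) := by
      intro c
      refine ⟨fun i => c * (Lop b α β s (fun i : ℤ => if i = 0 then (1:ℝ) else 0)) i, ?_⟩
      rw [smul_mulVec, hA1]; rfl
    have c2 : ∀ c : ℝ, ∃ g : ℤ → ℝ, (c • (A*A)) *ᵥ (fun v => (fun i : ℤ => if i = 0 then (1:ℝ) else 0) (d x v)) = fun v => g (d x v) := by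
      intro c
      refine ⟨fun i => c * (Lop b α β s (Lop b α β s (fun i : ℤ => if i = 0 then (1:ℝ) else 0))) i, ?_⟩
      rw [smul_mulVec, ← mulVec_mulVec, hA1, hA2]; rfl
    have c3 : ∀ c : ℝ, ∃ g : ℤ → ℝ, (c • (A*A*A)) *ᵥ (fun v => (fun i : ℤ => if i = 0 then (1:ℝ) else 0) (d x v)) = fun v => g (d x v) := by
      intro c
      refine ⟨fun i => c * (Lop b α β s (Lop b α β s (Lop b α β s (fun i : ℤ => if i = 0 then (1:ℝ) else 0)))) i, ?_⟩
      rw [smul_mulVec, ← mulVec_mulVec, ← mulVec_mulVec, hA1, hA2, hA3]; rfl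
    intro k
    fin_cases k
    · have := c0 1; rw [one_smul] at this; exact this
    · exact c3 _
    · exact c1 _
    · exact c2 _
    · exact c0 _
    · exact c2 _
    · exact c0 _
    · exact c1 _
  have hfin := principleP W (fun u v => by simp only [hW, hdc u v]) t κ ht hW2 P Q ?_ ?_ (fun x => T (diagonal (W x))) ?_ ?_
  · intro x
    have h := hfin x
    simp only [hTW] at h
    exact (smul_eq_zero.1 h).resolve_left hζ
  · intro k
    apply hsy
    fin_cases k <;> simp [P, hAs, Matrix.transpose_mul, Matrix.mul_assoc]
  · intro k
    apply hsy
    fin_cases k <;> simp [Q, hAs, Matrix.transpose_mul, Matrix.mul_assoc]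
  · intro x
    simp only [Fin.sum_univ_eight, P, Q, hT]
    simp [Matrix.mul_assoc]
    module
  · intro x k y
    obtain ⟨g, hg⟩ := hQc x k
    have : ((T (diagonal (W x)) * Q k) *ᵥ (Pi.single x 1)) y = 0 := by
      rw [← mulVec_mulVec, hg, hTW, smul_mulVec, hrad]; simp
    simpa using this

lemma Lop_zero (b α β s : ℝ) (g : ℤ → ℝ) (n : ℤ) (h : ∀ i, n < i → g i = 0) :
    (∀ i, n + 1 < i → Lop b α β s g i = 0) ∧ Lop b α β s g (n+1) = cX b α (b^(n+1)) * g n := by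
  constructor
  · intro i hi
    simp only [Lop]
    rw [h (i-1) (by omega), h i (by omega), h (i+1) (by omega)]; ring
  · simp only [Lop]
    rw [h (n+1) (by omega), h (n+1+1) (by omega), add_sub_cancel_right]; ring

open Matrix in
lemma balanced {V : Type*} [Fintype V] [DecidableEq V] (A : Matrix V V ℝ) (d : V → V → ℕ)
    (hdc : ∀ u v, d u v = d v u) (hd0 : ∀ u v, d u v = 0 ↔ u = v)
    (htri : ∀ y z w, d z w = 1 → d y w ≤ d y z + 1 ∧ d y z ≤ d y w + 1)
    (hAd : ∀ u v, A u v = if d u v = 1 then 1 else 0)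
    (b α β s : ℝ) (hb : b ≠ 0)
    (hA : ∀ u (g : ℤ → ℝ), A *ᵥ (fun v => g (d u v)) = fun v => Lop b α β s g (d u v))
    (hc1 : cX b α (b^(1:ℤ)) ≠ 0) (hc2 : cX b α (b^(2:ℤ)) ≠ 0) (hc3 : cX b α (b^(3:ℤ)) ≠ 0)
    (f : V → V → ℝ) (γ ρ : ℝ)
    (hTD : ∀ x, A*A*A*diagonal (f x) - diagonal (f x)*A*A*A - (b+b⁻¹+1) • (A*A*diagonal (f x)*A - A*diagonal (f x)*A*A) - γ • (A*A*diagonal (f x) - diagonal (f x)*A*A) - ρ • (A*diagonal (f x)-diagonal (f x)*A) = 0)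
    (y z : V) (hyz : d y z = 3) :
    ∃ KC KA : ℝ, ∀ x,
      (∑ w, (if d z w = 1 ∧ d y w = 2 then f x w else 0) - ∑ w, (if d y w = 1 ∧ d z w = 2 then f x w else 0) = KC * (f x z - f x y)) ∧
      (∑ w, (if d z w = 1 ∧ d y w = 3 then f x w else 0) - ∑ w, (if d y w = 1 ∧ d z w = 3 then f x w else 0) = KA * (f x z - f x y)) := by
  set δ : ℤ → ℝ := fun i => if i = 0 then (1:ℝ) else 0 with hδ
  set r1 := Lop b α β s δ with hr1
  set r2 := Lop b α β s r1 with hr2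
  set r3 := Lop b α β s r2 with hr3
  set r4 := Lop b α β s r3 with hr4
  have h0 : ∀ x, (Pi.single x (1:ℝ) : V → ℝ) = fun v => δ (d x v) := by
    intro x; ext v
    by_cases h : x = v
    · subst h; simp [hδ, (hd0 x x).2 rfl]
    · have : d x v ≠ 0 := fun h' => h ((hd0 _ _).1 h')
      simp [hδ, this, Ne.symm h]
  have m2 : ∀ u v, (A*A) u v = r2 (d u v) := by
    intro u v
    have : ((A*A) *ᵥ Pi.single v 1) u = r2 (d v u) := by
      rw [h0, ← mulVec_mulVec, hA, hA]
    rw [hdc u v, ← this]; simp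
  have m3 : ∀ u v, (A*A*A) u v = r3 (d u v) := by
    intro u v
    have : ((A*A*A) *ᵥ Pi.single v 1) u = r3 (d v u) := by
      rw [h0, ← mulVec_mulVec, ← mulVec_mulVec, hA, hA, hA]
    rw [hdc u v, ← this]; simp
  have m4 : ∀ u v, (A*A*A*A) u v = r4 (d u v) := by
    intro u v
    have : ((A*A*A*A) *ᵥ Pi.single v 1) u = r4 (d v u) := by
      rw [h0, ← mulVec_mulVec, ← mulVec_mulVec, ← mulVec_mulVec, hA, hA, hA, hA]
    rw [hdc u v, ← this]; simp
  have z0 : ∀ i, (0:ℤ) < i → δ i = 0 := fun i hi => if_neg (by omega)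
  have z1 := Lop_zero b α β s δ 0 z0
  have z2 := Lop_zero b α β s r1 1 z1.1
  have z3 := Lop_zero b α β s r2 2 z2.1
  have e1 : r1 1 ≠ 0 := by
    have := z1.2
    norm_num [hδ] at this hc1
    rw [hr1]; simp only [hδ]; rw [this]; exact hc1
  have e2 : r2 2 ≠ 0 := by
    have h : r2 2 = _ := z2.2
    rw [h]; exact mul_ne_zero hc2 e1
  have e3 : r3 3 ≠ 0 := by
    have h : r3 3 = _ := z3.2
    rw [h]; exact mul_ne_zero hc3 e2
  have y2 : ∀ i, (2:ℤ) < i → r2 i = 0 := z2.1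
  have y3 : ∀ i, (3:ℤ) < i → r3 i = 0 := z3.1
  have hbt : b + b⁻¹ ≠ 0 := by
    intro h
    have : b * b + 1 = 0 := by
      have := congrArg (· * b) h
      simpa [add_mul, inv_mul_cancel₀ hb] using this
    nlinarith [sq_nonneg b]
  have hbt1 : b + b⁻¹ + 1 ≠ 0 := by
    intro h
    have : b * b + 1 + b = 0 := by
      have := congrArg (· * b) h
      simpa [add_mul, inv_mul_cancel₀ hb] using this
    nlinarith [sq_nonneg (b+1), sq_nonneg b]
  -- sums
  have s2 : ∀ (x y z : V), d y z = 3 → ∑ w, r2 (d y w) * f x w * A w z = r2 2 * ∑ w, (if d z w = 1 ∧ d y w = 2 then f x w else 0) := by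
    intro x y z h
    rw [Finset.mul_sum]
    refine Finset.sum_congr rfl fun w _ => ?_
    rw [hAd, hdc w z]
    by_cases h1 : d z w = 1
    · by_cases h2 : d y w = 2
      · simp [h1, h2]
      · have := htri y z w h1
        have h3 : r2 (d y w) = 0 := y2 _ (by omega)
        simp [h1, h2, h3]
    · simp [h1]
  have s3 : ∀ (x y z : V), d y z = 3 → ∑ w, r3 (d y w) * f x w * A w z = r3 2 * ∑ w, (if d z w = 1 ∧ d y w = 2 then f x w else 0)
      + r3 3 * ∑ w, (if d z w = 1 ∧ d y w = 3 then f x w else 0) := by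
    intro x y z h
    rw [Finset.mul_sum, Finset.mul_sum, ← Finset.sum_add_distrib]
    refine Finset.sum_congr rfl fun w _ => ?_
    rw [hAd, hdc w z]
    by_cases h1 : d z w = 1
    · by_cases h2 : d y w = 2
      · simp [h1, h2]
      · by_cases h4 : d y w = 3
        · simp [h1, h4]
        have := htri y z w h1
        have h3 : r3 (d y w) = 0 := y3 _ (by omega)
        simp [h1, h2, h3, h4]
    · simp [h1]
  have hAs : ∀ u v, A u v = A v u := fun u v => by rw [hAd, hAd, hdc]
  have hzy : d z y = 3 := by rw [hdc]; exact hyz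
  have q2 : ∀ x, (A*A*diagonal (f x)*A) y z = r2 2 * ∑ w, (if d z w = 1 ∧ d y w = 2 then f x w else 0) := by
    intro x
    rw [← s2 x y z hyz, Matrix.mul_apply]
    refine Finset.sum_congr rfl fun w _ => ?_
    rw [Matrix.mul_diagonal, m2]
  have q2' : ∀ x, (A*diagonal (f x)*(A*A)) y z = r2 2 * ∑ w, (if d y w = 1 ∧ d z w = 2 then f x w else 0) := by
    intro x
    rw [← s2 x z y hzy, Matrix.mul_apply]
    refine Finset.sum_congr rfl fun w _ => ?_
    rw [Matrix.mul_diagonal, m2, hdc w z, hAs y w]; ring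
  have q3 : ∀ x, (A*A*A*diagonal (f x)*A) y z = r3 2 * ∑ w, (if d z w = 1 ∧ d y w = 2 then f x w else 0)
      + r3 3 * ∑ w, (if d z w = 1 ∧ d y w = 3 then f x w else 0) := by
    intro x
    rw [← s3 x y z hyz, Matrix.mul_apply]
    refine Finset.sum_congr rfl fun w _ => ?_
    rw [Matrix.mul_diagonal, m3]
  have q3' : ∀ x, (A*diagonal (f x)*(A*A*A)) y z = r3 2 * ∑ w, (if d y w = 1 ∧ d z w = 2 then f x w else 0)
      + r3 3 * ∑ w, (if d y w = 1 ∧ d z w = 3 then f x w else 0) := by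
    intro x
    rw [← s3 x z y hzy, Matrix.mul_apply]
    refine Finset.sum_congr rfl fun w _ => ?_
    rw [Matrix.mul_diagonal, m3, hdc w z, hAs y w]; ring
  have hAyz : A y z = 0 := by rw [hAd, hyz]; simp
  have h2yz : r2 3 = 0 := y2 3 (by norm_num)
  have T1 : ∀ x, r3 3 * (f x z - f x y) - (b+b⁻¹+1) * (r2 2 * (∑ w, (if d z w = 1 ∧ d y w = 2 then f x w else 0) - ∑ w, (if d y w = 1 ∧ d z w = 2 then f x w else 0))) = 0 := by
    intro x
    have h : A*A*A*diagonal (f x) - diagonal (f x)*(A*A*A) - (b+b⁻¹+1) • (A*A*diagonal (f x)*A - A*diagonal (f x)*(A*A)) - γ • (A*A*diagonal (f x) - diagonal (f x)*(A*A)) - ρ • (A*diagonal (f x)-diagonal (f x)*A) = 0 := by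
      rw [← hTD x]; simp only [Matrix.mul_assoc]
    have h' := congrFun (congrFun h y) z
    simp only [Matrix.sub_apply, Matrix.smul_apply, q2, q2', Matrix.zero_apply, smul_eq_mul, Matrix.mul_diagonal, Matrix.diagonal_mul, m3, m2, hAyz, hyz] at h'
    push_cast at h'
    rw [h2yz] at h'
    linear_combination h'
  have T2 : ∀ x, r4 3 * (f x z - f x y) - (b+b⁻¹) * (r3 2 * (∑ w, (if d z w = 1 ∧ d y w = 2 then f x w else 0) - ∑ w, (if d y w = 1 ∧ d z w = 2 then f x w else 0))
      + r3 3 * (∑ w, (if d z w = 1 ∧ d y w = 3 then f x w else 0) - ∑ w, (if d y w = 1 ∧ d z w = 3 then f x w else 0)))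
      - γ * (r3 3 * (f x z - f x y) + r2 2 * (∑ w, (if d z w = 1 ∧ d y w = 2 then f x w else 0) - ∑ w, (if d y w = 1 ∧ d z w = 2 then f x w else 0))) = 0 := by
    intro x
    have h : A*A*A*A*diagonal (f x) - diagonal (f x)*(A*A*A*A) - (b+b⁻¹) • (A*A*A*diagonal (f x)*A - A*diagonal (f x)*(A*A*A))
       - γ • (A*A*A*diagonal (f x) - diagonal (f x)*(A*A*A) + A*A*diagonal (f x)*A - A*diagonal (f x)*(A*A)) - ρ • (A*A*diagonal (f x)-diagonal (f x)*(A*A)) = 0 := by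
      have e1 := congrArg (fun M => A * M) (hTD x)
      have e2 := congrArg (fun M => M * A) (hTD x)
      have e3 := congrArg₂ (· + ·) e1 e2
      simp only [Matrix.mul_zero, Matrix.zero_mul, add_zero] at e3
      rw [← e3]
      simp only [Matrix.mul_add, Matrix.mul_sub, Matrix.add_mul, Matrix.sub_mul, Matrix.mul_smul, Matrix.smul_mul, Matrix.mul_assoc]
      module
    have h' := congrFun (congrFun h y) z
    simp only [Matrix.sub_apply, Matrix.add_apply, Matrix.smul_apply, q2, q2', q3, q3', Matrix.zero_apply, smul_eq_mul, Matrix.mul_diagonal, Matrix.diagonal_mul, m4, m3, m2, hyz] at h'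
    push_cast at h'
    rw [h2yz] at h'
    linear_combination h'
  set KC := r3 3 / ((b+b⁻¹+1) * r2 2) with hKC
  have hKCe : ∀ x, (∑ w, (if d z w = 1 ∧ d y w = 2 then f x w else 0) - ∑ w, (if d y w = 1 ∧ d z w = 2 then f x w else 0) = KC * (f x z - f x y)) := by
    intro x
    have := T1 x
    rw [hKC, div_mul_eq_mul_div, eq_div_iff (mul_ne_zero hbt1 e2)]
    linear_combination -this
  refine ⟨KC, (r4 3 - (b+b⁻¹) * r3 2 * KC - γ * (r3 3 + r2 2 * KC)) / ((b+b⁻¹) * r3 3), fun x => ⟨hKCe x, ?_⟩⟩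
  have h1 := T2 x
  rw [hKCe x] at h1
  rw [div_mul_eq_mul_div, eq_div_iff (mul_ne_zero hbt e3)]
  linear_combination -h1

lemma cntR {V : Type*} [Fintype V] (P : V → Prop) [DecidablePred P] :
    (({z | P z}.ncard : ℕ) : ℝ) = ∑ z, if P z then (1:ℝ) else 0 := by
  rw [Finset.sum_boole, Set.ncard_eq_toFinset_card']
  simp

lemma dist_step {V : Type*} (G : SimpleGraph V) (hconn : G.Connected) (y z w : V) (h : G.dist z w = 1) :
    G.dist y w ≤ G.dist y z + 1 ∧ G.dist y z ≤ G.dist y w + 1 := by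
  have h1 := hconn.dist_triangle (u := y) (v := z) (w := w)
  have h2 := hconn.dist_triangle (u := y) (v := w) (w := z)
  rw [G.dist_comm (u := w) (v := z)] at h2
  omega

lemma dist_pred {V : Type*} (G : SimpleGraph V) (hconn : G.Connected) (u v : V) (n : ℕ) (h : G.dist u v = n + 1) :
    ∃ v', G.dist v v' = 1 ∧ G.dist u v' = n := by
  obtain ⟨p, hp⟩ := hconn.exists_walk_length_eq_dist v u
  rw [G.dist_comm, h] at hp
  cases p with
  | nil => simp at hp
  | @cons _ v' _ hadj q =>
    have h1 : G.dist v v' = 1 := SimpleGraph.dist_eq_one_iff_adj.2 hadj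
    refine ⟨v', h1, ?_⟩
    have h2 := SimpleGraph.dist_le q
    rw [G.dist_comm] at h2
    simp only [SimpleGraph.Walk.length_cons] at hp
    have h3 := dist_step G hconn u v v' h1
    omega

open Matrix in
lemma uniq {V : Type*} [Fintype V] (G : SimpleGraph V) (hconn : G.Connected) (A : Matrix V V ℝ)
    (hAd : ∀ u v, A u v = if G.dist u v = 1 then 1 else 0) (θ : ℝ) (u : V) (ψ : V → ℝ)
    (hr : ∀ v v', G.dist u v = G.dist u v' → ψ v = ψ v')
    (he : ∀ v, ∑ w, A v w * ψ w = θ * ψ v) (h0 : ψ u = 0) : ∀ v, ψ v = 0 := by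
  have key : ∀ n v, G.dist u v ≤ n → ψ v = 0 := by
    intro n
    induction n with
    | zero =>
      intro v hv
      rw [← h0]
      apply hr
      have : G.dist u v = 0 := by omega
      simpa using this
    | succ n ih =>
      intro v hv
      rcases Nat.lt_or_ge (G.dist u v) (n+1) with h | h
      · exact ih v (by omega)
      have hv : G.dist u v = n + 1 := by omega
      obtain ⟨v', h1, h2⟩ := dist_pred G hconn u v n hv
      have h3 := he v'
      rw [ih v' h2.le, mul_zero] at h3
      have h4 : ∑ w, A v' w * ψ w = (∑ w, if G.dist v' w = 1 ∧ G.dist u w = n+1 then (1:ℝ) else 0) * ψ v := by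
        rw [Finset.sum_mul]
        refine Finset.sum_congr rfl fun w _ => ?_
        rw [hAd]
        by_cases ha : G.dist v' w = 1
        · by_cases hb : G.dist u w = n+1
          · simp [ha, hb, hr w v (by omega)]
          · have := dist_step G hconn u v' w ha
            simp [ha, hb, ih w (by omega)]
        · simp [ha]
      rw [h4] at h3
      refine (mul_eq_zero.1 h3).resolve_left (ne_of_gt ?_)
      refine Finset.sum_pos' (fun w _ => by split_ifs <;> norm_num) ⟨v, Finset.mem_univ _, ?_⟩
      rw [if_pos ⟨by rw [G.dist_comm]; exact h1, hv⟩]; norm_num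
  exact fun v => key _ v le_rfl

lemma sum_radial {V : Type*} [Fintype V] (G : SimpleGraph V) (D : ℕ) (hdiam_le : ∀ x y : V, G.dist x y ≤ D)
    (p : ℕ → ℕ → ℕ → ℕ) (hdr : G.IsDistRegularWith D p) (g h : ℕ → ℝ) (u v : V) :
    ∑ w, g (G.dist u w) * h (G.dist v w) =
      ∑ i ∈ Finset.range (D+1), ∑ j ∈ Finset.range (D+1), g i * h j * p (G.dist u v) i j := by
  have : ∀ i ∈ Finset.range (D+1), ∀ j ∈ Finset.range (D+1), g i * h j * (p (G.dist u v) i j : ℝ) =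
      ∑ w, if G.dist u w = i ∧ G.dist v w = j then g i * h j else 0 := by
    intro i hi j hj
    simp only [Finset.mem_range] at hi hj
    rw [← hdr _ i j (hdiam_le u v) (by omega) (by omega) u v rfl, cntR, Finset.mul_sum]
    simp
  rw [Finset.sum_congr rfl fun i hi => Finset.sum_congr rfl fun j hj => this i hi j hj]
  rw [Finset.sum_congr rfl fun i _ => Finset.sum_comm, Finset.sum_comm]
  refine Finset.sum_congr rfl fun w _ => ?_
  have hu := hdiam_le u w
  have hv := hdiam_le v w
  rw [Finset.sum_eq_single (G.dist u w), Finset.sum_eq_single (G.dist v w)]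
  · simp
  · intro j _ hj; simp [Ne.symm hj]
  · intro h; exact absurd (Finset.mem_range.2 (by omega)) h
  · intro j _ hj; simp [Ne.symm hj]
  · intro h; exact absurd (Finset.mem_range.2 (by omega)) h

lemma params (t α : ℝ) (na nc nd : ℕ) (ha : (na : ℝ) = -α * t^2) (hc : (nc : ℝ) = t * (1+α))
    (hd : (nd : ℝ) = (t^2-t+1) * (1 + α * t)) (hna : 1 ≤ na) (hnc : 1 ≤ nc) (hnd : 1 ≤ nd) (h1 : 1 < t) (h2 : t ≤ 2) : False := by
  have hna' : (1:ℝ) ≤ na := by exact_mod_cast hna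
  have hnd' : (1:ℝ) ≤ nd := by exact_mod_cast hnd
  have hpos : 0 < 1 + α * t := by
    by_contra h
    push Not at h
    have : 0 < t^2-t+1 := by nlinarith
    nlinarith
  have hα : α * t < 0 := by
    by_contra h
    push Not at h
    nlinarith
  have hc2 : nc = 1 := by
    have : (nc : ℝ) < 2 := by nlinarith
    have : nc < 2 := by exact_mod_cast this
    omega
  rw [hc2] at hc
  have hat : α * t = 1 - t := by push_cast at hc; linarith
  have ha' : (na : ℝ) = t * (t - 1) := by rw [ha]; linear_combination (-t) * hat
  have hlt : (na : ℝ) < 2 := by rw [ha']; nlinarith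
  have : na < 2 := by exact_mod_cast hlt
  have hna1 : na = 1 := by omega
  rw [hna1] at ha'
  have hd' : (nd : ℝ) = 2 * (2 - t) := by rw [hd, hat]; push_cast at ha'; linear_combination (-(2-t)) * ha'
  push_cast at ha'
  nlinarith

lemma nbr_sum {V : Type*} [Fintype V] (G : SimpleGraph V) (hconn : G.Connected)
    (D : ℕ) (hdiam_le : ∀ x y : V, G.dist x y ≤ D)
    (p : ℕ → ℕ → ℕ → ℕ) (hdr : G.IsDistRegularWith D p) (hD : 1 ≤ D)
    (b α β : ℝ) (hcp : HasClassicalParams D p b α β) (u v : V) (g : ℤ → ℝ) :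
    ∑ w, (if G.dist v w = 1 then (1:ℝ) else 0) * g (G.dist u w) =
      p (G.dist u v) 1 (G.dist u v - 1) * (g ((G.dist u v : ℤ) - 1) - g (G.dist u v)) + p 0 1 1 * g (G.dist u v)
       + p (G.dist u v) 1 (G.dist u v + 1) * (g ((G.dist u v : ℤ) + 1) - g (G.dist u v)) := by
  obtain ⟨_, _, hc, hbb⟩ := hcp
  set i := G.dist u v with hi
  have hiD : i ≤ D := hdiam_le u v
  have hvu : G.dist v u = i := by rw [G.dist_comm]
  have k1 : (p 0 1 1 : ℝ) = ∑ w, if G.dist v w = 1 then (1:ℝ) else 0 := by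
    rw [← hdr 0 1 1 (by omega) hD hD v v (by simp), cntR]
    simp only [and_self]
  have k2 : (p i 1 (i-1) : ℝ) = ∑ w, if G.dist v w = 1 ∧ G.dist u w = i - 1 then (1:ℝ) else 0 := by
    rw [← hdr i 1 (i-1) hiD hD (by omega) v u hvu, cntR]
  have k3 : (p i 1 (i+1) : ℝ) = ∑ w, if G.dist v w = 1 ∧ G.dist u w = i + 1 then (1:ℝ) else 0 := by
    rcases Nat.lt_or_ge i D with h | h
    · rw [← hdr i 1 (i+1) hiD hD (by omega) v u hvu, cntR]
    · have : i = D := by omega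
      rw [hbb i hiD, ← this]
      rw [Finset.sum_eq_zero]
      · ring
      · intro w _
        have := hdiam_le u w
        rw [if_neg]; omega
  rw [k1, k2, k3, Finset.sum_mul, Finset.sum_mul, Finset.sum_mul, ← Finset.sum_add_distrib, ← Finset.sum_add_distrib]
  refine Finset.sum_congr rfl fun w _ => ?_
  by_cases h1 : G.dist v w = 1
  · have h2 := dist_step G hconn u v w h1
    rw [← hi] at h2
    have h3 : i = 0 → G.dist u w ≠ 0 := by
      intro h0 h0'
      have e1 : u = v := (hconn.dist_eq_zero_iff).1 (hi ▸ h0)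
      subst e1; omega
    rcases (show G.dist u w + 1 = i ∨ G.dist u w = i ∨ G.dist u w = i + 1 by omega) with h | h | h
    · have h4 : ((G.dist u w : ℕ) : ℤ) = (i:ℤ) - 1 := by omega
      have h5 : G.dist u w = i - 1 := by omega
      have h6 : i - 1 ≠ i + 1 := by omega
      rw [h4]; simp [h1, h5, h6]
    · have h5 : i ≠ i - 1 := by omega
      simp [h1, h, h5]
    · have h5 : i + 1 ≠ i - 1 := by omega
      simp [h1, h, h5]
  · simp [h1]

lemma gb_eq (b : ℝ) (hb1 : b ≠ 1) (i : ℕ) : gaussBracket b i = (b^i-1)/(b-1) := by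
  rw [gaussBracket, geom_sum_eq hb1]

open Matrix in
lemma mainBal {V : Type*} [Fintype V] (G : SimpleGraph V) (hconn : G.Connected)
    (D : ℕ) (hD : 4 ≤ D)
    (hdiam_le : ∀ x y : V, G.dist x y ≤ D)
    (p : ℕ → ℕ → ℕ → ℕ) (hdr : G.IsDistRegularWith D p)
    (b α β : ℝ) (hcp : HasClassicalParams D p b α β)
    (ha1 : p 1 1 1 = 0) (ha2 : p 2 1 2 ≠ 0)
    (y z : V) (hyz : G.dist y z = 3) :
    b ≠ 1 ∧ ∃ KC KA : ℝ, ∀ x,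
      (∑ w, (if G.dist z w = 1 ∧ G.dist y w = 2 then (b^(G.dist x w))⁻¹ else 0) - ∑ w, (if G.dist y w = 1 ∧ G.dist z w = 2 then (b^(G.dist x w))⁻¹ else 0) = KC * ((b^(G.dist x z))⁻¹ - (b^(G.dist x y))⁻¹)) ∧
      (∑ w, (if G.dist z w = 1 ∧ G.dist y w = 3 then (b^(G.dist x w))⁻¹ else 0) - ∑ w, (if G.dist y w = 1 ∧ G.dist z w = 3 then (b^(G.dist x w))⁻¹ else 0) = KA * ((b^(G.dist x z))⁻¹ - (b^(G.dist x y))⁻¹)) := by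
  classical
  have hns := nbr_sum G hconn D hdiam_le p hdr (by omega) b α β hcp
  obtain ⟨hb, hbm, hc, hbb⟩ := hcp
  -- vertices
  obtain ⟨z2, hz2, hyz2⟩ := dist_pred G hconn y z 2 hyz
  obtain ⟨z1, hz1, hyz1⟩ := dist_pred G hconn y z2 1 hyz2
  have hpos : ∀ i ≤ D, ∀ u v w : V, G.dist u v = i → G.dist v w = 1 → G.dist u w = i - 1 → 1 ≤ p i 1 (i-1) := by
    intro i hi u v w h1 h2 h3
    rw [← hdr i 1 (i-1) hi (by omega) (by omega) v u (by rw [G.dist_comm]; exact h1)]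
    exact (Set.ncard_pos (Set.toFinite _)).2 ⟨w, h2, h3⟩
  have hp2 : 1 ≤ p 2 1 1 := hpos 2 (by omega) y z2 z1 hyz2 hz1 hyz1
  have hp3 : 1 ≤ p 3 1 2 := hpos 3 (by omega) y z z2 hyz hz2 hyz2
  -- neighbor partition
  have part : ∀ i, i + 1 < D → ∀ v : V, G.dist y v = i + 1 → (p (i+1) 1 (i+1) : ℝ) = p 0 1 1 - p (i+1) 1 i - p (i+1) 1 (i+2) := by
    intro i hi v hv
    have := hns y v (fun j => if j = ((i+1 : ℕ) : ℤ) then 1 else 0)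
    rw [hv] at this
    have h2 : (p (i+1) 1 (i+1) : ℝ) = ∑ w, if G.dist v w = 1 ∧ G.dist y w = i + 1 then (1:ℝ) else 0 := by
      rw [← hdr (i+1) 1 (i+1) (by omega) (by omega) (by omega) v y (by rw [G.dist_comm]; exact hv), cntR]
    have h3 : ∑ w, (if G.dist v w = 1 then (1:ℝ) else 0) * (if ((G.dist y w : ℕ) : ℤ) = ((i+1 : ℕ) : ℤ) then 1 else 0) = p (i+1) 1 (i+1) := by
      rw [h2]
      refine Finset.sum_congr rfl fun w _ => ?_
      simp only [Nat.cast_inj]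
      by_cases h1 : G.dist v w = 1 <;> by_cases h2 : G.dist y w = i + 1 <;> simp [h1, h2]
    rw [h3] at this
    rw [this]
    simp
    ring
  have part1 := part 0 (by omega) z1 hyz1
  have part2 := part 1 (by omega) z2 hyz2
  have hc1 := hc 1 (by omega)
  have hc2 := hc 2 (by omega)
  have hc3 := hc 3 (by omega)
  have hb0 := hbb 0 (by omega)
  have hb1' := hbb 1 (by omega)
  have hb2 := hbb 2 (by omega)
  simp only [gaussBracket, Finset.sum_range_succ, Finset.sum_range_zero, zero_add, Nat.reduceSub, Nat.reduceAdd, pow_zero, pow_one, mul_zero, sub_zero, add_zero, mul_one, one_mul] at part1 part2 hc1 hc2 hc3 hb0 hb1' hb2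
  rw [ha1, hc1, hb0, hb1'] at part1
  push_cast at part1
  have ha2' : (p 2 1 2 : ℝ) = -α * (1+b)^2 := by
    rw [part2, hc2, hb0, hb2]
    linear_combination (-1 - b) * part1
  have hbneg : b < 0 ∨ 1 < b := by
    by_contra hcon
    push Not at hcon
    have h0 : 0 < b := lt_of_le_of_ne hcon.1 (Ne.symm hb)
    refine params (1+b) α (p 2 1 2) (p 2 1 1) (p 3 1 2) ha2' hc2 ?_ (by omega) hp2 hp3 (by linarith) (by linarith [hcon.2])
    rw [hc3]; ring
  have hb1 : b ≠ 1 := by rcases hbneg with h | h <;> intro h' <;> linarith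
  refine ⟨hb1, ?_⟩
  have hm1 : b - 1 ≠ 0 := sub_ne_zero.2 hb1
  set s := ∑ k ∈ Finset.range D, b ^ k with hs
  -- conversion to cX, bX
  have cc : ∀ i ≤ D, (p i 1 (i-1) : ℝ) = cX b α (b^(i:ℤ)) := by
    intro i hi
    rw [hc i hi, gb_eq b hb1, gb_eq b hb1, cX, zpow_natCast]
    rcases i with _ | i
    · simp
    · rw [Nat.add_sub_cancel, pow_succ b i, mul_inv_cancel_right₀ hb]
  have bb : ∀ i ≤ D, (p i 1 (i+1) : ℝ) = bX b α β s (b^(i:ℤ)) := by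
    intro i hi
    rw [hbb i hi, gb_eq b hb1 i, bX, zpow_natCast]; rfl
  set A : Matrix V V ℝ := fun u v => if G.dist u v = 1 then 1 else 0 with hAdef
  have hAd : ∀ u v, A u v = if G.dist u v = 1 then 1 else 0 := fun _ _ => rfl
  have hA : ∀ u (g : ℤ → ℝ), A *ᵥ (fun v => g (G.dist u v)) = fun v => Lop b α β s g (G.dist u v) := by
    intro u g
    ext v
    have h := hns u v g
    rw [cc _ (hdiam_le u v), bb _ (hdiam_le u v), hb0] at h
    simp only [mulVec, dotProduct, hAd]
    rw [h, Lop, aX]; ring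
  have hAs : ∀ u v, A u v = A v u := fun u v => by rw [hAd, hAd, G.dist_comm]
  set θ := s*β + C0 b α * (b-1) + B0 b α β s * (b⁻¹-1) with hθ
  set e := C1 b α * (b-1) + B1 b α β s * (b⁻¹-1) with he
  set ζ := s*β - θ with hζd
  have hζ : ζ ≠ 0 := by
    have h1 : ζ = bX b α β s 1 - bX b α β s b * b⁻¹ + 1 := by
      rw [← kth b α β s hb hb1, hζd, hθ]; ring
    have h2 := bb 0 (by omega)
    have h3 := bb 1 (by omega)
    simp only [Nat.cast_zero, zpow_zero, Nat.cast_one, zpow_one, zero_add, Nat.reduceAdd] at h2 h3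
    rw [h1, ← h2, ← h3]
    have h4 : (p 0 1 1 : ℝ) = p 1 1 2 + 1 := by rw [hb0, hb1']; linear_combination -part1
    rw [h4]
    have h5 : (0:ℝ) ≤ p 1 1 2 := Nat.cast_nonneg _
    have h6 : b⁻¹ ≤ 1 := by
      rcases hbneg with h | h
      · linarith [inv_lt_zero.2 h]
      · exact inv_le_one_of_one_le₀ h.le
    nlinarith
  set gW : ℤ → ℝ := fun i => -e + ζ * (b^i)⁻¹ with hgW
  have hLW : ∀ i, Lop b α β s gW i = θ * gW i := by
    intro i
    have hX : b^i ≠ 0 := zpow_ne_zero _ hb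
    have h := eig b α β s (b^i) hb hb1 hX
    simp only [Lop, hgW, zpow_add_one₀ hb i, zpow_sub_one₀ hb i, mul_inv, inv_inv]
    rw [← hθ, ← he] at h
    have h7 : aX b α β s (b^i) = s*β - bX b α β s (b^i) - cX b α (b^i) := rfl
    linear_combination ζ * h - e * h7
  have hWe : ∀ u v, ∑ w, A v w * gW (G.dist u w) = θ * gW (G.dist u v) := by
    intro u v
    have := congrFun (hA u gW) v
    rw [hLW] at this
    exact this
  have hgW0 : gW 0 ≠ 0 := by
    intro h0
    have h1 := uniq G hconn A hAd θ y (fun v => gW (G.dist y v)) (fun v v' h => by simp only [h]) (hWe y) (by simpa using h0) z1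
    simp only [hyz1] at h1
    simp only [hgW] at h0 h1
    push_cast at h1
    rw [zpow_one] at h1
    rw [zpow_zero] at h0
    have h2 : ζ * (b⁻¹ - 1) = 0 := by linear_combination h1 - h0
    have h3 : b⁻¹ - 1 = 0 := (mul_eq_zero.1 h2).resolve_left hζ
    apply hb1
    have : b⁻¹ = 1 := by linarith
    simpa using this
  set H : ℕ → ℝ := fun n => ∑ i ∈ Finset.range (D+1), ∑ j ∈ Finset.range (D+1), gW i * gW j * p n i j with hH
  have hWW : ∀ u v, ∑ w, gW (G.dist u w) * gW (G.dist w v) = H (G.dist u v) := by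
    intro u v
    have h := sum_radial G D hdiam_le p hdr (fun i => gW i) (fun i => gW i) u v
    refine Eq.trans ?_ h
    refine Finset.sum_congr rfl fun w _ => ?_
    rw [G.dist_comm (u := w) (v := v)]
  have hW2 : ∀ u v, gW 0 * ∑ w, gW (G.dist u w) * gW (G.dist w v) = H 0 * gW (G.dist u v) := by
    intro u v
    have h1 := uniq G hconn A hAd θ u (fun v => gW 0 * H (G.dist u v) - H 0 * gW (G.dist u v)) (fun v v' h => by simp only [h]) ?_ ?_ v
    · rw [hWW]; linarith
    · intro v
      have h2 : ∑ w, A v w * H (G.dist u w) = θ * H (G.dist u v) := by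
        simp_rw [← hWW, Finset.mul_sum]
        rw [Finset.sum_comm]
        refine Finset.sum_congr rfl fun x _ => ?_
        have h3 := hWe x v
        calc _ = gW (G.dist u x) * ∑ w, A v w * gW (G.dist x w) := by
              rw [Finset.mul_sum]; refine Finset.sum_congr rfl fun w _ => ?_; ring
          _ = _ := by rw [h3]; ring
      have h3 := hWe u v
      calc _ = gW 0 * ∑ w, A v w * H (G.dist u w) - H 0 * ∑ w, A v w * gW (G.dist u w) := by
            rw [Finset.mul_sum, Finset.mul_sum, ← Finset.sum_sub_distrib]
            refine Finset.sum_congr rfl fun w _ => ?_; ring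
        _ = _ := by rw [h2, h3]; ring
    · simp [mul_comm]
  have hd0 : ∀ u v, G.dist u v = 0 ↔ u = v := fun u v => hconn.dist_eq_zero_iff
  obtain ⟨γ, ρ, hTD⟩ := TDfull A (by ext u v; exact hAs v u) G.dist (fun u v => G.dist_comm) hd0 b α β s hb hb1 hA (-e) ζ (gW 0) (H 0) hζ hgW0 hW2
    (fun x => diagonal (fun v => (b^(G.dist x v : ℤ))⁻¹)) (fun x => rfl)
  have hcx1 : cX b α (b^(1:ℤ)) ≠ 0 := by
    have := cc 1 (by omega)
    push_cast at this
    rw [← this, hc1]; norm_num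
  have hcx2 : cX b α (b^(2:ℤ)) ≠ 0 := by
    have := cc 2 (by omega)
    push_cast at this
    rw [← this]; exact_mod_cast (by omega : p 2 1 1 ≠ 0)
  have hcx3 : cX b α (b^(3:ℤ)) ≠ 0 := by
    have := cc 3 (by omega)
    push_cast at this
    rw [← this]; exact_mod_cast (by omega : p 3 1 2 ≠ 0)
  have := balanced A G.dist (fun u v => G.dist_comm) hd0 (dist_step G hconn) hAd b α β s hb hA hcx1 hcx2 hcx3
    (fun x v => (b^(G.dist x v : ℤ))⁻¹) γ ρ hTD y z hyz
  simpa only [zpow_natCast] using this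

lemma sum_const_if {V : Type*} [Fintype V] (P : V → Prop) [DecidablePred P] (f : V → ℝ) (c : ℝ) (h : ∀ w, P w → f w = c) :
    ∑ w, (if P w then f w else 0) = (({w | P w}.ncard : ℕ) : ℝ) * c := by
  rw [cntR, Finset.sum_mul]
  refine Finset.sum_congr rfl fun w _ => ?_
  by_cases hw : P w
  · simp [hw, h w hw]
  · simp [hw]

lemma no_tri {V : Type*} [Fintype V] (G : SimpleGraph V) (hconn : G.Connected)
    (D : ℕ) (hD : 4 ≤ D) (p : ℕ → ℕ → ℕ → ℕ) (hdr : G.IsDistRegularWith D p) (ha1 : p 1 1 1 = 0)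
    (u v w : V) (h1 : G.dist u v = 1) (h2 : G.dist u w = 1) (hne : v ≠ w) : G.dist v w = 2 := by
  have h3 := dist_step G hconn v u w h2
  rw [G.dist_comm (u := v) (v := u), h1] at h3
  have h4 : G.dist v w ≠ 0 := fun h => hne (hconn.dist_eq_zero_iff.1 h)
  have h5 : G.dist v w ≠ 1 := by
    intro h
    have h6 := hdr 1 1 1 (by omega) (by omega) (by omega) u v h1
    rw [ha1, Set.ncard_eq_zero (Set.toFinite _)] at h6
    have : w ∈ ({z : V | G.dist u z = 1 ∧ G.dist v z = 1}) := ⟨h2, h⟩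
    rw [h6] at this
    exact this
  omega

lemma B_sub {V : Type*} [Fintype V] (G : SimpleGraph V) (hconn : G.Connected)
    (D : ℕ) (hD : 4 ≤ D)
    (hdiam_le : ∀ x y : V, G.dist x y ≤ D)
    (p : ℕ → ℕ → ℕ → ℕ) (hdr : G.IsDistRegularWith D p)
    (b α β : ℝ) (hcp : HasClassicalParams D p b α β)
    (ha1 : p 1 1 1 = 0) (ha2 : p 2 1 2 ≠ 0)
    (x y u : V) (hxy : G.dist x y = 3) (hxu : G.dist x u = 3) (hyu : G.dist y u = 1) :
    Bset G x y ⊆ Bset G x u := by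
  rintro q ⟨hq1, hq4⟩
  refine ⟨hq1, ?_⟩
  rw [hxy] at hq4
  rw [hxu]
  have hb := hcp.1
  obtain ⟨hb1, KC, KA, hK⟩ := mainBal G hconn D hD hdiam_le p hdr b α β hcp ha1 ha2 x y hxy
  have hyx : G.dist y x = 3 := by rw [G.dist_comm]; exact hxy
  have hqx : G.dist q x = 1 := by rw [G.dist_comm]; exact hq1
  have hqy : G.dist q y = 4 := by rw [G.dist_comm]; exact hq4
  have E1 := (hK y).2
  have E2 := (hK q).2
  have n1 : {w | G.dist y w = 1 ∧ G.dist x w = 3}.ncard = p 3 1 3 := hdr 3 1 3 (by omega) (by omega) (by omega) y x hyx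
  have n2 : {w | G.dist x w = 1 ∧ G.dist y w = 3}.ncard = p 3 1 3 := hdr 3 1 3 (by omega) (by omega) (by omega) x y hxy
  rw [sum_const_if (fun w => G.dist y w = 1 ∧ G.dist x w = 3) _ (b^1)⁻¹ (by rintro w ⟨h, _⟩; rw [h]),
    sum_const_if (fun w => G.dist x w = 1 ∧ G.dist y w = 3) _ (b^3)⁻¹ (by rintro w ⟨_, h⟩; rw [h]), n1, n2, hyx, G.dist_self] at E1
  rw [sum_const_if (fun w => G.dist x w = 1 ∧ G.dist y w = 3) _ (b^2)⁻¹ (by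
    rintro w ⟨h, h'⟩
    rw [no_tri G hconn D hD p hdr ha1 x q w hq1 h (by rintro rfl; omega)]), n2, hqx, hqy] at E2
  have E3 : ∑ w, (if G.dist y w = 1 ∧ G.dist x w = 3 then (b^(G.dist q w))⁻¹ else 0) = (p 3 1 3 : ℝ) * (b^4)⁻¹ := by
    have hi : b * b⁻¹ = 1 := mul_inv_cancel₀ hb
    simp only [← inv_pow] at E1 E2 ⊢
    linear_combination E2 + b⁻¹ * E1
  have E4 : ∑ w, (if G.dist y w = 1 ∧ G.dist x w = 3 ∧ G.dist q w = 3 then (1:ℝ) else 0) = 0 := by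
    have h4 : (b^3)⁻¹ - (b^4)⁻¹ ≠ 0 := by
      intro h
      apply hb1
      field_simp at h
      linarith
    have h5 : (p 3 1 3 : ℝ) * (b^4)⁻¹ = ∑ w, (if G.dist y w = 1 ∧ G.dist x w = 3 then (b^4)⁻¹ else 0) := by
      rw [sum_const_if (fun w => G.dist y w = 1 ∧ G.dist x w = 3) _ (b^4)⁻¹ (fun _ _ => rfl), n1]
    rw [h5, ← sub_eq_zero, ← Finset.sum_sub_distrib] at E3
    have h6 : (∑ w, (if G.dist y w = 1 ∧ G.dist x w = 3 ∧ G.dist q w = 3 then (1:ℝ) else 0)) * ((b^3)⁻¹ - (b^4)⁻¹) = 0 := by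
      refine Eq.trans ?_ E3
      rw [Finset.sum_mul]
      refine Finset.sum_congr rfl fun w _ => ?_
      by_cases ha : G.dist y w = 1
      · by_cases hc : G.dist x w = 3
        · have t1 := dist_step G hconn q y w ha
          have t2 := dist_step G hconn w x q hq1
          rw [G.dist_comm (u := w) (v := q), G.dist_comm (u := w) (v := x)] at t2
          rcases (show G.dist q w = 3 ∨ G.dist q w = 4 by omega) with h | h
          · simp [ha, hc, h]
          · simp [ha, hc, h]
        · simp [hc]
      · simp [ha]
    exact (mul_eq_zero.1 h6).resolve_right h4
  rw [Finset.sum_eq_zero_iff_of_nonneg (fun w _ => by split_ifs <;> norm_num)] at E4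
  have E5 := E4 u (Finset.mem_univ _)
  have E6 : G.dist q u ≠ 3 := by
    intro h
    rw [if_pos ⟨hyu, hxu, h⟩] at E5
    norm_num at E5
  have t1 := dist_step G hconn q y u hyu
  have t2 := dist_step G hconn u x q hq1
  rw [G.dist_comm (u := u) (v := q), G.dist_comm (u := u) (v := x)] at t2
  rw [G.dist_comm (u := u) (v := q)]
  omega

lemma exists_z {V : Type*} [Fintype V] (G : SimpleGraph V) (hconn : G.Connected)
    (D : ℕ) (hD : 4 ≤ D)
    (hdiam_le : ∀ x y : V, G.dist x y ≤ D)
    (p : ℕ → ℕ → ℕ → ℕ) (hdr : G.IsDistRegularWith D p)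
    (b α β : ℝ) (hcp : HasClassicalParams D p b α β)
    (ha1 : p 1 1 1 = 0) (ha2 : p 2 1 2 ≠ 0)
    (x y v : V) (hxy : G.dist x y = 3) (hxv : G.dist x v = 1) (hyv : G.dist y v = 3) :
    ∃ z, G.dist y z = 1 ∧ G.dist v z = 2 ∧ G.dist x z = 3 := by
  by_contra hcon
  have hb := hcp.1
  have hbm := hcp.2.1
  have hvy : G.dist v y = 3 := by rw [G.dist_comm]; exact hyv
  have hvx : G.dist v x = 1 := by rw [G.dist_comm]; exact hxv
  have hyx : G.dist y x = 3 := by rw [G.dist_comm]; exact hxy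
  obtain ⟨hb1, KC, KA, hK⟩ := mainBal G hconn D hD hdiam_le p hdr b α β hcp ha1 ha2 v y hvy
  have E1 := (hK y).1
  have E2 := (hK x).1
  have n1 : {w | G.dist y w = 1 ∧ G.dist v w = 2}.ncard = p 3 1 2 := hdr 3 1 2 (by omega) (by omega) (by omega) y v hyv
  have n2 : {w | G.dist v w = 1 ∧ G.dist y w = 2}.ncard = p 3 1 2 := hdr 3 1 2 (by omega) (by omega) (by omega) v y hvy
  have hp : (p 3 1 2 : ℝ) ≠ 0 := by
    obtain ⟨w, hw, hw'⟩ := dist_pred G hconn v y 2 hvy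
    have : 0 < p 3 1 2 := by
      rw [← n1]
      exact (Set.ncard_pos (Set.toFinite _)).2 ⟨w, hw, hw'⟩
    positivity
  rw [sum_const_if (fun w => G.dist y w = 1 ∧ G.dist v w = 2) _ (b^1)⁻¹ (by rintro w ⟨h, _⟩; rw [h]),
    sum_const_if (fun w => G.dist v w = 1 ∧ G.dist y w = 2) _ (b^2)⁻¹ (by rintro w ⟨_, h⟩; rw [h]), n1, n2, hyv, G.dist_self] at E1
  rw [sum_const_if (fun w => G.dist y w = 1 ∧ G.dist v w = 2) _ (b^2)⁻¹ (by
      rintro w ⟨h, h'⟩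
      have t1 := dist_step G hconn x y w h
      have t2 := dist_step G hconn w x v hxv
      rw [G.dist_comm (u := w) (v := v), G.dist_comm (u := w) (v := x)] at t2
      have t3 : G.dist x w ≠ 3 := fun h3 => hcon ⟨w, h, h', h3⟩
      rw [show G.dist x w = 2 by omega]),
    sum_const_if (fun w => G.dist v w = 1 ∧ G.dist y w = 2) _ (b^2)⁻¹ (by
      rintro w ⟨h, h'⟩
      rw [no_tri G hconn D hD p hdr ha1 v x w hvx h (by rintro rfl; omega)]), n1, n2, hxy, hxv, sub_self] at E2
  have h1 : (b^3)⁻¹ - (b^1)⁻¹ ≠ 0 := by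
    intro h
    have h2 : (b - 1) * (b + 1) = 0 := by
      field_simp at h
      linarith
    rcases mul_eq_zero.1 h2 with h | h
    · exact hb1 (by linarith)
    · exact hbm (by linarith)
  have hKC : KC = 0 := (mul_eq_zero.1 E2.symm).resolve_right h1
  rw [hKC, zero_mul, ← mul_sub] at E1
  have h3 := (mul_eq_zero.1 E1).resolve_left hp
  apply hb1
  field_simp at h3
  linarith

/-- Classical parameters `(D, b, α, β)`, `D ≥ 4`, `a₁ = 0`, `a₂ ≠ 0`,
`∂(x,y) = 3`, `Δ = [x, C]`. Then `B(x,y) ∩ Δ = ∅` and `Γ₁(x) ∩ Δ = C(x,y) ∪ A(x,y)`;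
in particular `|Γ₁(x) ∩ Δ| = a₃ + c₃` (`= p³₁₃ + p³₁₂`). -/
theorem Delta_inter_sphere_one [Fintype V] (G : SimpleGraph V) (hconn : G.Connected)
    (D : ℕ) (hD : 4 ≤ D)
    (hdiam_le : ∀ x y : V, G.dist x y ≤ D) (hdiam : ∃ x y : V, G.dist x y = D)
    (p : ℕ → ℕ → ℕ → ℕ) (hdr : G.IsDistRegularWith D p)
    (b α β : ℝ) (hcp : HasClassicalParams D p b α β)
    (ha1 : p 1 1 1 = 0) (ha2 : p 2 1 2 ≠ 0)
    (x y : V) (hxy : G.dist x y = 3) :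
    Bset G x y ∩ Delta G x y = ∅ ∧
    {v : V | G.dist x v = 1} ∩ Delta G x y = Cset G x y ∪ Aset G x y ∧
    ({v : V | G.dist x v = 1} ∩ Delta G x y).ncard = p 3 1 3 + p 3 1 2 := by
  have hin : ∀ v, v ∈ Bset G x y → v ∉ Delta G x y := by
    rintro v hv ⟨z, ⟨hz3, hzB⟩, hz⟩
    rw [← hzB] at hv
    obtain ⟨h1, h2⟩ := hv
    rw [G.dist_comm (u := v) (v := z)] at hz
    omega
  have hset : {v : V | G.dist x v = 1} ∩ Delta G x y = Cset G x y ∪ Aset G x y := by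
    ext v
    constructor
    · rintro ⟨h1, h2⟩
      simp only [Set.mem_setOf_eq] at h1
      have h3 := dist_step G hconn y x v h1
      rw [G.dist_comm (u := y) (v := x)] at h3
      have h4 : ¬ (G.dist y v = G.dist x y + 1) := fun h => hin v ⟨h1, h⟩ h2
      rcases (show G.dist y v = G.dist x y - 1 ∨ G.dist y v = G.dist x y by omega) with h | h
      · exact Or.inl ⟨h1, h⟩
      · exact Or.inr ⟨h1, h⟩
    · rintro (⟨h1, h2⟩ | ⟨h1, h2⟩)
      · refine ⟨h1, y, ⟨hxy, rfl⟩, ?_⟩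
        rw [G.dist_comm (u := v) (v := y)]; omega
      · rw [hxy] at h2
        obtain ⟨z, hz1, hz2, hz3⟩ := exists_z G hconn D hD hdiam_le p hdr b α β hcp ha1 ha2 x y v hxy h1 h2
        refine ⟨h1, z, ⟨hz3, ?_⟩, by omega⟩
        apply Set.Subset.antisymm
        · exact B_sub G hconn D hD hdiam_le p hdr b α β hcp ha1 ha2 x z y hz3 hxy (by rw [G.dist_comm]; exact hz1)
        · exact B_sub G hconn D hD hdiam_le p hdr b α β hcp ha1 ha2 x y z hxy hz3 hz1
  refine ⟨?_, hset, ?_⟩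
  · ext v
    simp only [Set.mem_inter_iff, Set.mem_empty_iff_false, iff_false, not_and]
    exact hin v
  · rw [hset, Set.ncard_union_eq ?_ (Set.toFinite _) (Set.toFinite _)]
    · have n1 : (Cset G x y).ncard = p 3 1 2 := by
        rw [← hdr 3 1 2 (by omega) (by omega) (by omega) x y hxy]
        simp only [Cset, hxy]
      have n2 : (Aset G x y).ncard = p 3 1 3 := by
        rw [← hdr 3 1 3 (by omega) (by omega) (by omega) x y hxy]
        simp only [Aset, hxy]
      rw [n1, n2, add_comm]
    · rw [Set.disjoint_left]
      rintro v ⟨_, h1⟩ ⟨_, h2⟩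
      omega
end

section
/- Let Γ be a distance-regular graph with classical parameters (D, b, α, β), D ≥ 4, and intersection numbers a₁ = 0 and a₂ ≠ 0. Fix vertices x, y with ∂(x,y) = 3, set C = {z ∈ Γ₃(x) : B(x,z) = B(x,y)} and Δ = [x,C] = {v ∈ X : ∃ z ∈ C with ∂(x,v)+∂(v,z)=∂(x,z)}. Let x = x₀, x₁, x₂, x₃ be a sequence of vertices in Δ with ∂(x,x_j) = j and ∂(x_{j−1},x_j) = 1 for 1 ≤ j ≤ 3. Then for 0 ≤ i ≤ 2, if s is a neighbor of x_i with s ∉ Δ and z ∈ A(x_{i+1},s) (i.e., z is a neighbor of x_{i+1} with ∂(s,z) = 2), then z ∉ Δ. -/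
/-!
Common definitions: distance-regular graphs (via an intersection-number function `p`),
classical parameters, and the sets `B(x,y)`, `A(x,y)`, `C(x,y)`.
The distance `∂` is `SimpleGraph.dist`.
-/

variable {V : Type*}

namespace NM

def Lop (c a d φ : ℤ → ℝ) : ℤ → ℝ := fun i => c i * φ (i-1) + a i * φ i + d i * φ (i+1)

lemma tri_abs (c a d w : ℤ → ℝ) (s γ ϱ : ℝ)
    (E3 : ∀ i, w (i+3) - s * w (i+2) + s * w (i+1) - w i = 0)
    (E2 : ∀ i, a i * (w (i+2) - s * w (i+1) + s * w i - w i) + a (i+1) * (w (i+2) - w i)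
      + a (i+2) * (w (i+2) - s * w (i+2) + s * w (i+1) - w i) - γ * (w (i+2) - w i) = 0)
    (E1 : ∀ i, a i ^ 2 * (w (i+1) - w i)
      + a i * a (i+1) * (w (i+1) - s * w (i+1) + s * w i - w i)
      + a (i+1) ^ 2 * (w (i+1) - w i)
      + d i * c (i+1) * (w (i+1) - s * w i + s * w (i+1) - w i)
      + c i * d (i-1) * (w (i+1) - s * w i + s * w (i-1) - w i)
      + d (i+1) * c (i+2) * (w (i+1) - s * w (i+2) + s * w (i+1) - w i)
      - γ * (a i + a (i+1)) * (w (i+1) - w i) - ϱ * (w (i+1) - w i) = 0)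
    (φ : ℤ → ℝ) (i : ℤ) :
    Lop c a d (Lop c a d (Lop c a d (w * φ))) i
      - s * Lop c a d (Lop c a d (w * Lop c a d φ)) i
      + s * Lop c a d (w * Lop c a d (Lop c a d φ)) i
      - w i * Lop c a d (Lop c a d (Lop c a d φ)) i
      - γ * (Lop c a d (Lop c a d (w * φ)) i - w i * Lop c a d (Lop c a d φ) i)
      - ϱ * (Lop c a d (w * φ) i - w i * Lop c a d φ i) = 0 := by
  have e3 := E3 i
  have e3' := E3 (i-3)
  have e2 := E2 i
  have e2' := E2 (i-2)
  have e1 := E1 i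
  have e1' := E1 (i-1)
  simp only [Lop, Pi.mul_apply]
  have h1 : i - 3 + 3 = i := by ring
  have h2 : i - 3 + 2 = i - 1 := by ring
  have h3 : i - 3 + 1 = i - 2 := by ring
  have h4 : i - 2 + 2 = i := by ring
  have h5 : i - 2 + 1 = i - 1 := by ring
  have h6 : i - 1 + 1 = i := by ring
  have h7 : i - 1 + 2 = i + 1 := by ring
  have h8 : i - 1 - 1 = i - 2 := by ring
  have h9 : i + 1 + 1 = i + 2 := by ring
  have h10 : i + 1 - 1 = i := by ring
  have h11 : i + 2 + 1 = i + 3 := by ring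
  have h12 : i + 2 - 1 = i + 1 := by ring
  have h13 : i - 2 - 1 = i - 3 := by ring
  simp only [h1, h2, h3, h4, h5, h6, h7, h8, h9, h10, h11, h12, h13] at *
  linear_combination d i * d (i+1) * d (i+2) * φ (i+3) * e3
    + d i * d (i+1) * φ (i+2) * e2 + d i * φ (i+1) * e1
    - c i * φ (i-1) * e1' - c i * c (i-1) * φ (i-2) * e2'
    - c i * c (i-1) * c (i-2) * φ (i-3) * e3'

lemma tri_cl (b α U : ℝ) (hb : b ≠ 0) (u w : ℤ → ℝ)
    (hu : ∀ i, u (i+1) = 1 + b * u i) (hw : ∀ i, w i = b * w (i+1)) (c a d : ℤ → ℝ)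
    (hc : ∀ i, c i = u i * (1 + α * u (i-1))) (ha : ∀ i, a i = α * u i * (1 - u i - u (i-1)))
    (hd : ∀ i, d i = (U - u i) * (1 + α - α * U - α * u i))
    (s γ ϱ : ℝ) (hs : s = b + 1/b + 1) (hγ : γ = α * (1+b)/b)
    (hϱ : ϱ = (1+b)^2/b * (U * (1 + α - α * U)) - (1+b)^2*(1+α)*(U-1)*(1-α*U)/b^2)
    (φ : ℤ → ℝ) (i : ℤ) :
    Lop c a d (Lop c a d (Lop c a d (w * φ))) i
      - s * Lop c a d (Lop c a d (w * Lop c a d φ)) i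
      + s * Lop c a d (w * Lop c a d (Lop c a d φ)) i
      - w i * Lop c a d (Lop c a d (Lop c a d φ)) i
      - γ * (Lop c a d (Lop c a d (w * φ)) i - w i * Lop c a d (Lop c a d φ) i)
      - ϱ * (Lop c a d (w * φ) i - w i * Lop c a d φ i) = 0 := by
  apply tri_abs
  · intro i
    have h0 := hw i
    have h1 := hw (i+1)
    have h2 := hw (i+2)
    rw [show i + 1 + 1 = i + 2 by ring] at h1
    rw [show i + 2 + 1 = i + 3 by ring] at h2
    rw [h0, h1, h2, hs]; field_simp; ring
  · intro i
    have h0 := hw i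
    have h1 := hw (i+1)
    rw [show i + 1 + 1 = i + 2 by ring] at h1
    have k0 := hu (i-1)
    have k1 := hu i
    have k2 := hu (i+1)
    rw [show i + 1 + 1 = i + 2 by ring] at k2
    rw [show i - 1 + 1 = i by ring] at k0
    simp only [ha]
    rw [show i + 1 - 1 = i by ring, show i + 2 - 1 = i + 1 by ring]
    rw [h0, h1, hs, hγ, k2, k1, k0]; field_simp; ring
  · intro i
    have h0 := hw i
    have h1 := hw (i+1)
    have h2 := hw (i-1)
    rw [show i + 1 + 1 = i + 2 by ring] at h1
    rw [show i - 1 + 1 = i by ring] at h2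
    have k0 := hu (i-1)
    have k1 := hu i
    have k2 := hu (i+1)
    rw [show i + 1 + 1 = i + 2 by ring] at k2
    rw [show i - 1 + 1 = i by ring] at k0
    simp only [ha, hc, hd]
    rw [show i + 1 - 1 = i by ring, show i + 2 - 1 = i + 1 by ring]
    rw [h2, h0, h1, hs, hγ, hϱ, k2, k1, k0]; field_simp; ring

lemma eig_cl (b α U : ℝ) (hb : b ≠ 0) (u w : ℤ → ℝ)
    (hu : ∀ i, u (i+1) = 1 + b * u i) (hw : ∀ i, w i = b * w (i+1))
    (huw : ∀ i, w i * (1 + (b - 1) * u i) = 1) (c a d : ℤ → ℝ)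
    (hc : ∀ i, c i = u i * (1 + α * u (i-1))) (ha : ∀ i, a i = α * u i * (1 - u i - u (i-1)))
    (hd : ∀ i, d i = (U - u i) * (1 + α - α * U - α * u i)) (i : ℤ) :
    Lop c a d w i = (U * (1 + α - α * U) / b - (b+1)/b) * w i + (b+1)/b := by
  have h0 := hw i
  have h2 := hw (i-1)
  rw [show i - 1 + 1 = i by ring] at h2
  have k0 := hu (i-1)
  rw [show i - 1 + 1 = i by ring] at k0
  have k1 := huw i
  have h3 : w (i+1) = w i / b := by rw [h0]; field_simp
  simp only [Lop, hc, ha, hd, h2, h3]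
  have k3 : u (i-1) = (u i - 1)/b := by rw [k0]; field_simp; ring
  rw [k3]
  field_simp
  linear_combination (b+1) * k1

end NM

namespace NM

open Matrix

lemma norm_arg {V K : Type*} [Fintype V] [DecidableEq V] [Fintype K] (G H : K → Matrix V V ℝ)
    (F : Matrix V V ℝ) (lam rho : ℝ)
    (hF : ∀ u v, ∑ z, F z u * F z v = lam * F u v + rho)
    (hGH : ∀ x y, ∑ k, (G k * H k) x y = 0)
    (T : V → Matrix V V ℝ) (hT : ∀ u x y, T u x y = ∑ z, (∑ k, G k x z * H k z y) * F u z)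
    (hrad : ∀ k z x, ∑ y, T z x y * H k z y = 0) : ∀ u x y, T u x y = 0 := by
  have hW : ∀ x y, ∑ z, (∑ k, G k x z * H k z y) = 0 := by
    intro x y
    rw [Finset.sum_comm, ← hGH x y]
    rfl
  have h1 : ∀ x y, ∑ u, T u x y ^ 2 = lam * ∑ z, (∑ k, G k x z * H k z y) * T z x y := by
    intro x y
    set W : V → ℝ := fun z => ∑ k, G k x z * H k z y with hWd
    have hW0 : ∑ z, W z = 0 := hW x y
    have hT' : ∀ u, T u x y = ∑ z, W z * F u z := fun u => hT u x y
    calc ∑ u, T u x y ^ 2 = ∑ u, ∑ z, ∑ z', W z * W z' * (F u z * F u z') := by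
          refine Finset.sum_congr rfl fun u _ => ?_
          rw [hT', sq, Finset.sum_mul_sum]
          refine Finset.sum_congr rfl fun z _ => Finset.sum_congr rfl fun z' _ => ?_
          ring
      _ = ∑ z, ∑ z', W z * W z' * (∑ u, F u z * F u z') := by
          rw [Finset.sum_comm]
          refine Finset.sum_congr rfl fun z _ => ?_
          rw [Finset.sum_comm]
          refine Finset.sum_congr rfl fun z' _ => ?_
          exact (Finset.mul_sum _ _ _).symm
      _ = ∑ z, ∑ z', (lam * (W z * (W z' * F z z')) + rho * W z * W z') := by
          refine Finset.sum_congr rfl fun z _ => Finset.sum_congr rfl fun z' _ => ?_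
          rw [hF]; ring
      _ = lam * ∑ z, W z * T z x y := by
          rw [Finset.mul_sum]
          refine Finset.sum_congr rfl fun z _ => ?_
          rw [Finset.sum_add_distrib, ← Finset.mul_sum (a := rho * W z), hW0, hT',
            ← Finset.mul_sum, ← Finset.mul_sum]
          ring
  have h2 : ∑ x, ∑ y, ∑ u, T u x y ^ 2 = 0 := by
    simp only [h1]
    have : ∀ x, ∑ y, ∑ z, (∑ k, G k x z * H k z y) * T z x y = 0 := by
      intro x
      rw [Finset.sum_comm]
      refine Finset.sum_eq_zero fun z _ => ?_
      simp only [Finset.sum_mul]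
      rw [Finset.sum_comm]
      refine Finset.sum_eq_zero fun k _ => ?_
      have := hrad k z x
      calc ∑ y, G k x z * H k z y * T z x y = G k x z * ∑ y, T z x y * H k z y := by
            rw [Finset.mul_sum]
            exact Finset.sum_congr rfl fun y _ => by ring
        _ = 0 := by rw [this, mul_zero]
    refine Finset.sum_eq_zero fun x _ => ?_
    rw [← Finset.mul_sum, this, mul_zero]
  intro u x y
  have a1 := (Finset.sum_eq_zero_iff_of_nonneg (fun x _ => Finset.sum_nonneg fun y _ =>
    Finset.sum_nonneg fun u _ => sq_nonneg (T u x y))).1 h2 x (Finset.mem_univ _)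
  have a2 := (Finset.sum_eq_zero_iff_of_nonneg (fun y _ =>
    Finset.sum_nonneg fun u _ => sq_nonneg (T u x y))).1 a1 y (Finset.mem_univ _)
  have a3 := (Finset.sum_eq_zero_iff_of_nonneg (fun u _ => sq_nonneg (T u x y))).1 a2 u
    (Finset.mem_univ _)
  exact pow_eq_zero_iff (two_ne_zero) |>.1 a3

def ind (i : ℤ) : ℤ → ℝ := fun j => if j = i then 1 else 0

def RM {V : Type*} (δ : V → V → ℕ) (φ : ℤ → ℝ) : Matrix V V ℝ := fun x y => φ (δ x y : ℤ)

lemma Lop_ind (c a d : ℤ → ℝ) (i : ℤ) : Lop c a d (ind i)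
    = c (i+1) • ind (i+1) + a i • ind i + d (i-1) • ind (i-1) := by
  funext j
  simp only [Lop, ind, Pi.add_apply, Pi.smul_apply, smul_eq_mul]
  have e1 : (j - 1 = i) ↔ (j = i + 1) := by omega
  have e2 : (j + 1 = i) ↔ (j = i - 1) := by omega
  simp only [e1, e2]
  by_cases h1 : j = i + 1
  · have h2 : ¬ j = i := by omega
    have h3 : ¬ j = i - 1 := by omega
    simp only [h2, h3, if_false, if_pos h1]; subst h1; ring
  · by_cases h2 : j = i
    · have h3 : ¬ j = i - 1 := by omega
      simp only [h1, h3, if_false, if_pos h2]; subst h2; ring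
    · by_cases h3 : j = i - 1
      · simp only [h1, h2, if_false, if_pos h3]; subst h3; ring
      · simp [h1, h2, h3]

set_option linter.unusedSectionVars false

section
variable {V : Type*} [Fintype V] [DecidableEq V] (δ : V → V → ℕ)
  (c a d w : ℤ → ℝ)

lemma RM_add (φ ψ : ℤ → ℝ) : RM δ (φ + ψ) = RM δ φ + RM δ ψ := rfl
lemma RM_smul (r : ℝ) (φ : ℤ → ℝ) : RM δ (r • φ) = r • RM δ φ := rfl
lemma RM_neg (φ : ℤ → ℝ) : RM δ (-φ) = - RM δ φ := rfl
lemma RM_sub (φ ψ : ℤ → ℝ) : RM δ (φ - ψ) = RM δ φ - RM δ ψ := rfl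

variable (hsym : ∀ x y, δ x y = δ y x) (h0 : ∀ x y, δ x y = 0 ↔ x = y)
  (hL : ∀ (φ : ℤ → ℝ) x y, ∑ z, (if δ x z = 1 then φ (δ z y : ℤ) else 0)
    = Lop c a d φ (δ x y : ℤ))

include hL in
lemma A_mul_RM (φ : ℤ → ℝ) : RM δ (ind 1) * RM δ φ = RM δ (Lop c a d φ) := by
  ext x y
  rw [Matrix.mul_apply]
  simp only [RM, ind]
  rw [← hL]
  refine Finset.sum_congr rfl fun z _ => ?_
  by_cases h : δ x z = 1 <;> simp [h]

include h0 in
lemma RM_zero : RM δ (ind 0) = 1 := by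
  ext x y
  simp only [RM, ind, Matrix.one_apply, Nat.cast_eq_zero, h0]

include hL h0 in
lemma pow_RM (n : ℕ) : ∃ φ, (RM δ (ind 1)) ^ n = RM δ φ := by
  induction n with
  | zero => exact ⟨ind 0, by rw [pow_zero, RM_zero δ h0]⟩
  | succ n ih =>
    obtain ⟨φ, h⟩ := ih
    exact ⟨Lop c a d φ, by rw [pow_succ', h, A_mul_RM δ c a d hL]⟩

include hL h0 hsym in
lemma Fsq (D : ℕ) (hD : ∀ x y, δ x y ≤ D) (hcn : ∀ n : ℕ, 1 ≤ n → n ≤ D → c n ≠ 0) (θ τ k : ℝ)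
    (heig : ∀ i, Lop c a d w i = θ * w i + τ) (hk : ∀ i, Lop c a d 1 i = k) :
    ∃ lam rho : ℝ, ∀ u v, ∑ z, RM δ w z u * RM δ w z v = lam * RM δ w u v + rho := by
  have hAF : RM δ (ind 1) * RM δ w = θ • RM δ w + τ • RM δ 1 := by
    rw [A_mul_RM δ c a d hL, ← RM_smul, ← RM_smul, ← RM_add]
    congr 1; funext i; simp [heig]
  have hAJ : RM δ (ind 1) * RM δ 1 = k • RM δ 1 := by
    rw [A_mul_RM δ c a d hL, ← RM_smul]
    congr 1; funext i; simp [hk]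
  have good : ∀ n : ℕ, n ≤ D →
      (∃ l r : ℝ, RM δ (ind n) * RM δ w = l • RM δ w + r • RM δ 1) ∧
      (∃ l r : ℝ, RM δ (ind (n-1)) * RM δ w = l • RM δ w + r • RM δ 1) := by
    intro n
    induction n with
    | zero =>
      intro _
      refine ⟨⟨1, 0, ?_⟩, ⟨0, 0, ?_⟩⟩
      · rw [Nat.cast_zero, RM_zero δ h0]; simp
      · have : RM δ (ind (((0:ℕ):ℤ) - 1)) = 0 := by
          ext x y
          simp only [RM, ind, Matrix.zero_apply]
          rw [if_neg]; omega
        rw [this]; simp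
    | succ n ih =>
      intro hn
      obtain ⟨⟨l, r, h1⟩, ⟨l', r', h2⟩⟩ := ih (by omega)
      refine ⟨?_, ⟨l, r, ?_⟩⟩
      · have hne := hcn (n+1) (by omega) hn
        have e := A_mul_RM δ c a d hL (ind n)
        rw [Lop_ind, RM_add, RM_add, RM_smul, RM_smul, RM_smul] at e
        push_cast at hne ⊢
        have e2 : c (n+1) • (RM δ (ind (n+1)) * RM δ w)
            = RM δ (ind 1) * (RM δ (ind n) * RM δ w) - a n • (RM δ (ind n) * RM δ w)
              - d (n-1) • (RM δ (ind (n-1)) * RM δ w) := by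
          rw [← mul_assoc, e]
          simp only [add_mul, smul_mul_assoc]
          abel
        have e3 : RM δ (ind (n+1)) * RM δ w = (c (n+1))⁻¹ •
            (c (n+1) • (RM δ (ind (n+1)) * RM δ w)) := by
          rw [smul_smul, inv_mul_cancel₀ hne, one_smul]
        rw [e3, e2, h1, h2, mul_add, mul_smul_comm, mul_smul_comm, hAF, hAJ]
        refine ⟨(c (n+1))⁻¹ * (l * θ - a n * l - d (n-1) * l'),
          (c (n+1))⁻¹ * (l * τ + r * k - a n * r - d (n-1) * r'), ?_⟩
        module
      · push_cast
        rw [add_sub_cancel_right]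
        exact h1
  have good' : ∀ n : ℕ, ∃ l r : ℝ, n ≤ D → RM δ (ind n) * RM δ w = l • RM δ w + r • RM δ 1 := by
    intro n
    by_cases h : n ≤ D
    · obtain ⟨l, r, h'⟩ := (good n h).1
      exact ⟨l, r, fun _ => h'⟩
    · exact ⟨0, 0, fun h' => absurd h' h⟩
  choose l r hlr using good'
  have hFs : RM δ w = ∑ n ∈ Finset.range (D+1), w n • RM δ (ind n) := by
    ext x y
    rw [Matrix.sum_apply]
    simp only [Matrix.smul_apply, RM, ind, smul_eq_mul, Nat.cast_inj, mul_ite, mul_one, mul_zero]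
    rw [Finset.sum_ite_eq]
    rw [if_pos]
    rw [Finset.mem_range]; have := hD x y; omega
  have hFF : RM δ w * RM δ w = (∑ n ∈ Finset.range (D+1), w n * l n) • RM δ w
      + (∑ n ∈ Finset.range (D+1), w n * r n) • RM δ 1 := by
    nth_rewrite 1 [hFs]
    rw [Finset.sum_mul, Finset.sum_smul, Finset.sum_smul, ← Finset.sum_add_distrib]
    refine Finset.sum_congr rfl fun n hn => ?_
    rw [smul_mul_assoc, hlr n (by rw [Finset.mem_range] at hn; omega), smul_add, smul_smul,
      smul_smul]
  refine ⟨∑ n ∈ Finset.range (D+1), w n * l n, ∑ n ∈ Finset.range (D+1), w n * r n, fun u v => ?_⟩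
  have := congrFun (congrFun hFF u) v
  rw [Matrix.mul_apply] at this
  rw [show ∑ z, RM δ w z u * RM δ w z v = ∑ z, RM δ w u z * RM δ w z v from
    Finset.sum_congr rfl fun z _ => by simp only [RM]; rw [hsym z u], this]
  simp [RM]

end

end NM

namespace NM

open Matrix

section
variable {V : Type*} [Fintype V] [DecidableEq V] (δ : V → V → ℕ)
  (c a d w : ℤ → ℝ)

def Dg (u : V) : Matrix V V ℝ := Matrix.diagonal (fun z => w (δ u z : ℤ))

def TT (s γ ϱ : ℝ) (A E : Matrix V V ℝ) : Matrix V V ℝ :=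
  A * A * A * E - s • (A * A * E * A) + s • (A * E * A * A) - E * A * A * A
    - γ • (A * A * E - E * A * A) - ϱ • (A * E - E * A)

def vec (z : V) (φ : ℤ → ℝ) : V → ℝ := fun y => φ (δ y z : ℤ)

variable (hsym : ∀ x y, δ x y = δ y x) (h0 : ∀ x y, δ x y = 0 ↔ x = y)
  (hL : ∀ (φ : ℤ → ℝ) x y, ∑ z, (if δ x z = 1 then φ (δ z y : ℤ) else 0)
    = Lop c a d φ (δ x y : ℤ))

include hL in
lemma A_vec (z : V) (φ : ℤ → ℝ) : RM δ (ind 1) *ᵥ vec δ z φ = vec δ z (Lop c a d φ) := by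
  funext x
  have := congrFun (congrFun (A_mul_RM δ c a d hL φ) x) z
  exact this

include hsym in
lemma D_vec (z : V) (φ : ℤ → ℝ) : Dg δ w z *ᵥ vec δ z φ = vec δ z (w * φ) := by
  funext x
  simp [Dg, Matrix.mulVec_diagonal, vec, hsym z x]

include hL h0 hsym in
lemma main_rel (s γ ϱ : ℝ)
    (hF : ∃ lam rho : ℝ, ∀ u v, ∑ z, RM δ w z u * RM δ w z v = lam * RM δ w u v + rho)
    (htri : ∀ (φ : ℤ → ℝ) (i : ℤ), Lop c a d (Lop c a d (Lop c a d (w * φ))) i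
      - s * Lop c a d (Lop c a d (w * Lop c a d φ)) i
      + s * Lop c a d (w * Lop c a d (Lop c a d φ)) i
      - w i * Lop c a d (Lop c a d (Lop c a d φ)) i
      - γ * (Lop c a d (Lop c a d (w * φ)) i - w i * Lop c a d (Lop c a d φ) i)
      - ϱ * (Lop c a d (w * φ) i - w i * Lop c a d φ i) = 0) (u : V) :
    TT s γ ϱ (RM δ (ind 1)) (Dg δ w u) = 0 := by
  obtain ⟨lam, rho, hF⟩ := hF
  set A := RM δ (ind 1) with hA
  have key := norm_arg (K := Fin 4)
    ![A*A*A - γ • (A*A) - ϱ • A, ϱ • 1 - s • (A*A), γ • 1 + s • A, -1] ![1, A, A*A, A*A*A]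
    (RM δ w) lam rho hF ?_ (fun u => TT s γ ϱ A (Dg δ w u)) ?_ ?_
  · ext x y; exact key u x y
  · intro x y
    rw [← Matrix.sum_apply]
    simp only [Fin.sum_univ_four]
    simp
    have : (A*A*A - γ • (A*A) - ϱ • A) + ( ϱ • 1 - s • (A*A)) * A + (γ • 1 + s • A) * (A * A)
       + - (A * A * A) = 0 := by
      simp only [sub_mul, add_mul, smul_mul_assoc, one_mul, mul_assoc]
      module
    have := congrFun (congrFun this x) y
    simpa using this
  · intro u x y
    have e : TT s γ ϱ A (Dg δ w u) = (A*A*A - γ • (A*A) - ϱ • A) * Dg δ w u * 1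
        + ( ϱ • 1 - s • (A*A)) * Dg δ w u * A + (γ • 1 + s • A) * Dg δ w u * (A * A)
       + (-1) * Dg δ w u * (A * A * A) := by
      simp only [TT, sub_mul, add_mul, smul_mul_assoc, one_mul, mul_assoc, mul_one, neg_mul]
      module
    have g : ∀ M N : Matrix V V ℝ, (M * Dg δ w u * N) x y = ∑ z, M x z * N z y * RM δ w u z := by
      intro M N
      rw [Matrix.mul_apply]
      refine Finset.sum_congr rfl fun z _ => ?_
      rw [Dg, Matrix.mul_diagonal, RM]; ring
    simp only [e, Matrix.add_apply, g, ← Finset.sum_add_distrib]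
    refine Finset.sum_congr rfl fun z _ => ?_
    rw [Fin.sum_univ_four]
    simp only [Matrix.cons_val]
    simp only [Matrix.add_apply]
    ring
  · intro k z x
    have hr : ∀ φ : ℤ → ℝ, ∑ y, TT s γ ϱ A (Dg δ w z) x y * RM δ φ z y = 0 := by
      intro φ
      have : TT s γ ϱ A (Dg δ w z) *ᵥ vec δ z φ = 0 := by
        simp only [TT, Matrix.sub_mulVec, Matrix.add_mulVec, Matrix.smul_mulVec,
          ← Matrix.mulVec_mulVec, hA, A_vec δ c a d hL, D_vec δ w hsym]
        funext y
        have := htri φ (δ y z)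
        simpa [vec] using this
      have := congrFun this x
      rw [Matrix.mulVec, dotProduct] at this
      rw [← Pi.zero_apply (M := fun _ => ℝ) x, ← this]
      refine Finset.sum_congr rfl fun y _ => ?_
      rw [vec, RM, hsym z y]
    have hk : ∃ φ, (![1, A, A*A, A*A*A] : Fin 4 → Matrix V V ℝ) k = RM δ φ := by
      obtain ⟨f, hf⟩ := pow_RM δ c a d h0 hL k
      refine ⟨f, ?_⟩
      rw [← hf, ← hA]
      fin_cases k <;> simp [pow_succ]
    obtain ⟨φ, hk⟩ := hk
    simp only [hk]
    exact hr φ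

def CR (N : Matrix V V ℝ) : Prop := ∃ q : ℤ → ℝ, ∀ u,
  RM δ (ind 1) * Dg δ w u * N - N * Dg δ w u * RM δ (ind 1) = RM δ q * Dg δ w u - Dg δ w u * RM δ q

lemma CR_sub {M N : Matrix V V ℝ} (hM : CR δ w M) (hN : CR δ w N) : CR δ w (M - N) := by
  obtain ⟨p, hp⟩ := hM
  obtain ⟨q, hq⟩ := hN
  refine ⟨p - q, fun u => ?_⟩
  have h1 := hp u
  have h2 := hq u
  rw [RM_sub]
  simp only [mul_sub, sub_mul]
  have : ∀ a b c d e f g h : Matrix V V ℝ, a - b = c - d → e - f = g - h →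
    a - e - (b - f) = c - g - (d - h) := by
    intro a b c d e f g h h1 h2
    have : a - e - (b - f) = (a - b) - (e - f) := by abel
    rw [this, h1, h2]; abel
  exact this _ _ _ _ _ _ _ _ h1 h2

lemma CR_smul (r : ℝ) {M : Matrix V V ℝ} (hM : CR δ w M) : CR δ w (r • M) := by
  obtain ⟨p, hp⟩ := hM
  refine ⟨r • p, fun u => ?_⟩
  have h1 := hp u
  rw [RM_smul]
  simp only [mul_smul_comm, smul_mul_assoc, ← smul_sub, h1]

lemma CR_one : CR δ w 1 := ⟨ind 1, fun u => by simp⟩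

lemma CR_A : CR δ w (RM δ (ind 1)) := ⟨0, fun u => by
  have : RM δ (0 : ℤ → ℝ) = 0 := rfl
  simp [this]⟩

include hL h0 in
lemma CR_23 (s γ ϱ : ℝ) (hs : s ≠ 0) (hs1 : s ≠ 1)
    (hT : ∀ u, TT s γ ϱ (RM δ (ind 1)) (Dg δ w u) = 0) :
    CR δ w (RM δ (ind 1) * RM δ (ind 1)) ∧
    CR δ w (RM δ (ind 1) * RM δ (ind 1) * RM δ (ind 1)) := by
  obtain ⟨f1, hf1⟩ := pow_RM δ c a d h0 hL 1
  obtain ⟨f2, hf2⟩ := pow_RM δ c a d h0 hL 2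
  obtain ⟨f3, hf3⟩ := pow_RM δ c a d h0 hL 3
  obtain ⟨f4, hf4⟩ := pow_RM δ c a d h0 hL 4
  set A := RM δ (ind 1) with hA
  have h2 : ∀ u, A * Dg δ w u * (A*A) - (A*A) * Dg δ w u * A =
      (-s⁻¹) • ((A*A*A - γ • (A*A) - ϱ • A) * Dg δ w u - Dg δ w u * (A*A*A - γ • (A*A) - ϱ • A)) := by
    intro u
    have h := hT u
    set E := Dg δ w u
    have : s • (A * E * (A*A) - (A*A) * E * A) =
      - ((A*A*A - γ • (A*A) - ϱ • A) * E - E * (A*A*A - γ • (A*A) - ϱ • A)) := by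
      rw [eq_neg_iff_add_eq_zero, ← h, TT]
      simp only [sub_mul, mul_sub, smul_mul_assoc, mul_smul_comm, mul_assoc]
      module
    rw [neg_smul, ← smul_neg, ← this, smul_smul, inv_mul_cancel₀ hs, one_smul]
  obtain ⟨P, hP⟩ : ∃ P, P = (-s⁻¹) • (A*A*A - γ • (A*A) - ϱ • A) := ⟨_, rfl⟩
  have hZ : ∀ u, A * Dg δ w u * (A*A) - (A*A) * Dg δ w u * A = P * Dg δ w u - Dg δ w u * P := by
    intro u
    rw [h2, hP, smul_mul_assoc, mul_smul_comm, smul_sub]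
  have hPf : P = RM δ ((-s⁻¹) • (f3 - γ • f2 - ϱ • f1)) := by
    rw [hP, RM_smul, RM_sub, RM_sub, RM_smul, RM_smul, ← hf1, ← hf2, ← hf3]
    simp only [pow_succ, pow_zero, one_mul]
  refine ⟨⟨(-s⁻¹) • (f3 - γ • f2 - ϱ • f1), fun u => ?_⟩, ?_⟩
  · rw [hZ, hPf]
  · have hp : (1 - s⁻¹) ≠ 0 := by
      intro h
      apply hs1
      have : s⁻¹ = 1 := by linarith
      exact inv_eq_one.1 this
    refine ⟨(1 - s⁻¹)⁻¹ • (Lop c a d ((-s⁻¹) • (f3 - γ • f2 - ϱ • f1))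
      + (-s⁻¹ * γ) • ((-s⁻¹) • (f3 - γ • f2 - ϱ • f1))), fun u => ?_⟩
    rw [RM_smul, RM_add, ← A_mul_RM δ c a d hL, RM_smul δ (-s⁻¹ * γ), ← hPf, ← hA]
    have h := hZ u
    set E := Dg δ w u
    have l1 : A * E * (A*A*A) - (A*A*A) * E * A = A * (A * E * (A*A) - (A*A) * E * A)
        + (A * E * (A*A) - (A*A) * E * A) * A := by noncomm_ring
    have l2 : P * E * A - A * E * P = (-s⁻¹) • (- (A * E * (A*A*A) - (A*A*A) * E * A)
        + γ • (A * E * (A*A) - (A*A) * E * A)) := by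
      rw [hP]
      simp only [sub_mul, mul_sub, smul_mul_assoc, mul_smul_comm, mul_assoc]
      module
    have hcom : P * A = A * P := by
      rw [hP]
      simp only [sub_mul, mul_sub, smul_mul_assoc, mul_smul_comm, mul_assoc]
    rw [h] at l1 l2
    obtain ⟨X, hX⟩ : ∃ X, X = A * E * (A*A*A) - (A*A*A) * E * A := ⟨_, rfl⟩
    rw [← hX] at l1 l2 ⊢
    have l3 : (1 - s⁻¹) • X = (A * P + (-s⁻¹ * γ) • P) * E - E * (A * P + (-s⁻¹ * γ) • P) := by
      have : X = (A * P) * E - E * (A * P) + (P * E * A - A * E * P) := by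
        have hc2 : E * (A * P) = E * (P * A) := by rw [hcom]
        rw [l1, hc2]
        noncomm_ring
      rw [l2] at this
      have e : (1 - s⁻¹) • X = X - s⁻¹ • X := by module
      rw [e]
      nth_rewrite 1 [this]
      simp only [sub_mul, mul_sub, add_mul, mul_add, smul_mul_assoc, mul_smul_comm, mul_assoc]
      module
    rw [smul_mul_assoc, mul_smul_comm, ← smul_sub, ← l3, smul_smul, inv_mul_cancel₀ hp, one_smul]

include hL h0 in
lemma CR_ind (hcA : c 2 ≠ 0) (hcB : c 3 ≠ 0) (s γ ϱ : ℝ) (hs : s ≠ 0) (hs1 : s ≠ 1)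
    (hT : ∀ u, TT s γ ϱ (RM δ (ind 1)) (Dg δ w u) = 0) :
    CR δ w (RM δ (ind 2)) ∧ CR δ w (RM δ (ind 3)) := by
  obtain ⟨k2, k3⟩ := CR_23 δ c a d w h0 hL s γ ϱ hs hs1 hT
  have e1 := A_mul_RM δ c a d hL (ind 1)
  have e2 := A_mul_RM δ c a d hL (ind 2)
  rw [Lop_ind, RM_add, RM_add, RM_smul, RM_smul, RM_smul] at e1 e2
  norm_num at e1 e2
  rw [RM_zero δ h0] at e1
  set A := RM δ (ind 1)
  have f1 : RM δ (ind 2) = (c 2)⁻¹ • (A * A - a 1 • A - d 0 • 1) := by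
    rw [e1]
    have : c 2 • RM δ (ind 2) + a 1 • A + d 0 • (1 : Matrix V V ℝ) - a 1 • A - d 0 • 1
      = c 2 • RM δ (ind 2) := by abel
    rw [this, smul_smul, inv_mul_cancel₀ hcA, one_smul]
  have f2 : RM δ (ind 3) = (c 3)⁻¹ • (A * RM δ (ind 2) - a 2 • RM δ (ind 2) - d 1 • A) := by
    rw [e2]
    have : c 3 • RM δ (ind 3) + a 2 • RM δ (ind 2) + d 1 • A - a 2 • RM δ (ind 2) - d 1 • A
      = c 3 • RM δ (ind 3) := by abel
    rw [this, smul_smul, inv_mul_cancel₀ hcB, one_smul]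
  have g2 : CR δ w (RM δ (ind 2)) := by
    rw [f1]
    exact CR_smul δ w _ (CR_sub δ w (CR_sub δ w k2 (CR_smul δ w _ (CR_A δ w)))
      (CR_smul δ w _ (CR_one δ w)))
  refine ⟨g2, ?_⟩
  have g3 : CR δ w (A * RM δ (ind 2)) := by
    rw [f1, mul_smul_comm, mul_sub, mul_sub, mul_smul_comm, mul_smul_comm, mul_one, ← mul_assoc]
    exact CR_smul δ w _ (CR_sub δ w (CR_sub δ w k3 (CR_smul δ w _ k2))
      (CR_smul δ w _ (CR_A δ w)))
  rw [f2]
  exact CR_smul δ w _ (CR_sub δ w (CR_sub δ w g3 (CR_smul δ w _ g2))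
      (CR_smul δ w _ (CR_A δ w)))

include hsym in
lemma CR_entry (i : ℕ) (h : CR δ w (RM δ (ind i))) : ∃ q : ℕ → ℝ, ∀ u x y,
    ∑ z, (if δ x z = 1 ∧ δ y z = i then w (δ u z) else 0)
      - ∑ z, (if δ y z = 1 ∧ δ x z = i then w (δ u z) else 0)
      = q (δ x y) * (w (δ u y) - w (δ u x)) := by
  obtain ⟨q, hq⟩ := h
  refine ⟨fun n => q n, fun u x y => ?_⟩
  have := congrFun (congrFun (hq u) x) y
  have g : ∀ M N : Matrix V V ℝ, (M * Dg δ w u * N) x y = ∑ z, M x z * N z y * RM δ w u z := by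
    intro M N
    rw [Matrix.mul_apply]
    refine Finset.sum_congr rfl fun z _ => ?_
    rw [Dg, Matrix.mul_diagonal, RM]; ring
  rw [Matrix.sub_apply, Matrix.sub_apply, g, g, Dg, Matrix.mul_diagonal, Matrix.diagonal_mul] at this
  simp only [RM] at this
  rw [mul_sub, mul_comm (q _) (w (δ u x)), ← this]
  congr 1
  · refine Finset.sum_congr rfl fun z _ => ?_
    rw [hsym y z]
    simp only [ind, Nat.cast_inj, Nat.cast_eq_one]
    split_ifs <;> simp_all
  · refine Finset.sum_congr rfl fun z _ => ?_
    rw [hsym y z]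
    simp only [ind, Nat.cast_inj, Nat.cast_eq_one]
    split_ifs <;> simp_all

end

end NM

namespace NM

lemma b_lt (b α : ℝ) (c2 c3 c4 a2 a3 : ℕ) (hb0 : b ≠ 0) (hb1 : b ≠ -1)
    (hc2 : (c2:ℝ) = (1+b)*(1+α)) (hc3 : (c3:ℝ) = (1+b+b^2)*(1+α*(1+b)))
    (hc4 : (c4:ℝ) = (1+b+b^2+b^3)*(1+α*(1+b+b^2))) (ha2 : (a2:ℝ) = -α*(1+b)^2)
    (ha3 : (a3:ℝ) = -α*(1+b+b^2)*(1+b)^2) (p2 : 1 ≤ c2) (p4 : 1 ≤ c4) (q2 : 1 ≤ a2) :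
    b < -1 := by
  by_contra hcon
  push Not at hcon
  have hb : -1 < b := lt_of_le_of_ne hcon (Ne.symm hb1)
  have p2' : (1:ℝ) ≤ c2 := by exact_mod_cast p2
  have p4' : (1:ℝ) ≤ c4 := by exact_mod_cast p4
  have q2' : (1:ℝ) ≤ a2 := by exact_mod_cast q2
  have hα : α < 0 := by
    by_contra h
    push Not at h
    nlinarith [sq_nonneg (1+b), mul_nonneg h (sq_nonneg (1+b))]
  rcases lt_or_gt_of_ne hb0 with h | h
  · nlinarith [mul_pos (show 0 < 1+b by linarith) (neg_pos.2 hα)]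
  · have h4 : 0 < 1+α*(1+b+b^2) := by
      by_contra hn
      push Not at hn
      have : 0 < 1+b+b^2+b^3 := by positivity
      nlinarith [mul_nonneg this.le (neg_nonneg.2 hn)]
    have h5 : a2 < 2 := by
      by_contra hn
      push Not at hn
      have hn' : (2:ℝ) ≤ a2 := by exact_mod_cast hn
      have : 0 < 1+b+b^2 := by positivity
      have h6 : 0 < (1+b)^2 := by positivity
      have h7 : 0 < (1+b)^2 - a2 * (1+b+b^2) := by
        have := mul_pos h6 h4
        rw [ha2]; nlinarith
      nlinarith [mul_le_mul_of_nonneg_right hn' this.le]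
    have h6 : a2 = 1 := by omega
    rw [h6] at ha2
    push_cast at ha2
    obtain ⟨t, ht⟩ : ∃ t, t = 1 + b := ⟨_, rfl⟩
    have hbt : b = t - 1 := by linarith
    subst hbt
    have e0 : α * t^2 = -1 := by nlinarith
    have e1 : t * c2 = t^2 - 1 := by
      rw [hc2]; ring_nf; linear_combination e0
    have e2 : (a3:ℝ) = t^2 - t + 1 := by
      rw [ha3]; linear_combination (-(t^2 - t + 1)) * e0
    have e3 : t * c3 = (t^2-t+1)*(t-1) := by
      rw [hc3]; linear_combination (t^2 - t + 1) * e0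
    have e4 : t * (((a3:ℤ) - c3 - c2 + 1 : ℤ) : ℝ) = 2 := by
      push_cast
      rw [mul_add, mul_sub, mul_sub, e1, e3, e2]; ring
    have ht1 : 1 < t := by linarith
    obtain ⟨m, hm⟩ : ∃ m : ℤ, m = (a3:ℤ) - c3 - c2 + 1 := ⟨_, rfl⟩
    rw [← hm] at e4
    have m0 : 0 < m := by
      have : (0:ℝ) < m := by
        by_contra hn
        push Not at hn
        nlinarith
      exact_mod_cast this
    have m1 : m < 2 := by
      have : (m:ℝ) < 2 := by
        have : (0:ℝ) < m := by exact_mod_cast m0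
        nlinarith
      exact_mod_cast this
    have m2 : m = 1 := by omega
    rw [m2] at e4
    push_cast at e4
    have : t = 2 := by linarith
    rw [this] at e1
    have : 2 * c2 = 3 := by
      have : (2:ℝ) * c2 = 3 := by linarith
      exact_mod_cast this
    omega

section
variable {V : Type*} (G : SimpleGraph V) 

lemma pred_dist (hconn : G.Connected) {x y : V} {n : ℕ} (h : G.dist x y = n + 1) :
    ∃ z, G.dist x z = n ∧ G.dist z y = 1 := by
  obtain ⟨w, hw⟩ := (hconn y x).exists_walk_length_eq_dist
  rw [G.dist_comm (u := y) (v := x), h] at hw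
  cases w with
  | nil => simp at hw
  | @cons _ z _ hadj q =>
    simp at hw
    refine ⟨z, ?_, ?_⟩
    · have h1 : G.dist z x ≤ n := hw ▸ G.dist_le q
      have h2 : G.dist x y ≤ G.dist x z + G.dist z y := hconn.dist_triangle
      have h3 : G.dist z y = 1 := SimpleGraph.dist_eq_one_iff_adj.2 hadj.symm
      have := G.dist_comm (u := x) (v := z)
      omega
    · exact SimpleGraph.dist_eq_one_iff_adj.2 hadj.symm

lemma ex_dist (hconn : G.Connected) {D : ℕ} (hdiam : ∃ x y : V, G.dist x y = D) (n : ℕ)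
    (hn : n ≤ D) : ∃ x y : V, G.dist x y = n := by
  induction D with
  | zero => obtain rfl : n = 0 := by omega
            exact hdiam
  | succ D ih =>
    rcases Nat.lt_or_ge D n with h | h
    · obtain rfl : n = D + 1 := by omega
      exact hdiam
    · obtain ⟨x, y, h1⟩ := hdiam
      obtain ⟨z, hz, _⟩ := pred_dist G hconn h1
      exact ih ⟨x, z, hz⟩ h

end

section
variable {V : Type*} [Fintype V] [DecidableEq V] (G : SimpleGraph V)

lemma ncard_filter (P : V → Prop) [DecidablePred P] :
    {z : V | P z}.ncard = (Finset.univ.filter P).card := by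
  rw [← Set.ncard_coe_finset]; simp

/-- number of neighbours, by distance -/
noncomputable def Nc (x y : V) (j : ℕ) : ℕ := (Finset.univ.filter fun z => G.dist x z = 1 ∧ G.dist y z = j).card

lemma Nc_eq {D : ℕ} {p : ℕ → ℕ → ℕ → ℕ} (hdr : G.IsDistRegularWith D p) (hD : 1 ≤ D)
    (hdiam_le : ∀ x y : V, G.dist x y ≤ D) (x y : V) (j : ℕ) (hj : j ≤ D) :
    Nc G x y j = p (G.dist x y) 1 j := by
  rw [← hdr (G.dist x y) 1 j (hdiam_le x y) hD hj x y rfl, ncard_filter]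
  rfl

lemma tri3 (hconn : G.Connected) {x y z : V} (h : G.dist x z = 1) :
    G.dist y z + 1 = G.dist x y ∨ G.dist y z = G.dist x y ∨ G.dist y z = G.dist x y + 1 := by
  have h1 : G.dist x y ≤ G.dist x z + G.dist z y := hconn.dist_triangle
  have h2 : G.dist y z ≤ G.dist y x + G.dist x z := hconn.dist_triangle
  have := G.dist_comm (u := x) (v := y)
  have := G.dist_comm (u := z) (v := y)
  omega

lemma sum_nb (hconn : G.Connected) (φ : ℤ → ℝ) (x y : V) (g : ℕ → ℕ)
    (hg : ∀ n, g n = if n = 0 then 0 else Nc G x y (n - 1)) :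
    ∑ z, (if G.dist x z = 1 then φ (G.dist z y : ℤ) else 0)
      = g (G.dist x y) * φ ((G.dist x y : ℤ) - 1)
        + Nc G x y (G.dist x y) * φ (G.dist x y) + Nc G x y (G.dist x y + 1) * φ ((G.dist x y : ℤ) + 1) := by
  obtain ⟨h, hh⟩ : ∃ h, h = G.dist x y := ⟨_, rfl⟩
  rw [← hh]
  have e1 : (g h : ℝ) * φ ((h:ℤ) - 1) = ∑ z, if G.dist x z = 1 ∧ G.dist y z + 1 = h then φ ((h:ℤ)-1) else 0 := by
    rw [← Finset.sum_filter, Finset.sum_const, nsmul_eq_mul, hg]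
    congr 2
    split_ifs with h0
    · symm
      rw [Finset.card_eq_zero, Finset.filter_eq_empty_iff]
      intro z _ hz
      omega
    · unfold Nc
      congr 1
      ext z
      simp only [Finset.mem_filter, Finset.mem_univ, true_and]
      omega
  have e2 : ∀ j : ℕ, (Nc G x y j : ℝ) * φ j = ∑ z, if G.dist x z = 1 ∧ G.dist y z = j then φ j else 0 := by
    intro j
    rw [← Finset.sum_filter, Finset.sum_const, nsmul_eq_mul, Nc]
  have e3 := e2 (h+1)
  push_cast at e3
  rw [e1, e2 h, e3, ← Finset.sum_add_distrib, ← Finset.sum_add_distrib]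
  refine Finset.sum_congr rfl fun z _ => ?_
  by_cases hz : G.dist x z = 1
  · have h3 := tri3 G hconn (y := y) hz
    rw [← hh] at h3
    rw [G.dist_comm (u := z)]
    rcases h3 with h3 | h3 | h3
    · rw [if_pos hz, if_pos ⟨hz, h3⟩, if_neg (by omega), if_neg (by omega),
        show ((G.dist y z : ℕ) : ℤ) = h - 1 by omega]; ring
    · rw [if_pos hz, if_neg (by omega), if_pos (by omega), if_neg (by omega),
        show ((G.dist y z : ℕ) : ℤ) = h by omega]; ring
    · rw [if_pos hz, if_neg (by omega), if_neg (by omega), if_pos (by omega),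
        show ((G.dist y z : ℕ) : ℤ) = h + 1 by omega]; ring
  · simp [hz]

lemma core (hconn : G.Connected)
    (D : ℕ) (hD : 4 ≤ D)
    (hdiam_le : ∀ x y : V, G.dist x y ≤ D) (hdiam : ∃ x y : V, G.dist x y = D)
    (p : ℕ → ℕ → ℕ → ℕ) (hdr : G.IsDistRegularWith D p)
    (b α β : ℝ) (hcp : HasClassicalParams D p b α β)
    (ha1 : p 1 1 1 = 0) (ha2 : p 2 1 2 ≠ 0) :
    ∃ r : ℝ, -1 < r ∧ r < 0 ∧ ∀ i, i = 2 ∨ i = 3 → ∃ q : ℕ → ℝ, ∀ u x y,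
    ∑ z, (if G.dist x z = 1 ∧ G.dist y z = i then r ^ (G.dist u z) else 0)
      - ∑ z, (if G.dist y z = 1 ∧ G.dist x z = i then r ^ (G.dist u z) else 0)
      = q (G.dist x y) * (r ^ (G.dist u y) - r ^ (G.dist u x)) := by
  obtain ⟨hb0, hb1, hcf, hbf⟩ := hcp
  have gb0 : gaussBracket b 0 = 0 := by simp [gaussBracket]
  have gb1 : gaussBracket b 1 = 1 := by simp [gaussBracket]
  have gb2 : gaussBracket b 2 = 1 + b := by simp [gaussBracket, Finset.sum_range_succ]
  have gb3 : gaussBracket b 3 = 1 + b + b^2 := by simp [gaussBracket, Finset.sum_range_succ]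
  have gb4 : gaussBracket b 4 = 1 + b + b^2 + b^3 := by simp [gaussBracket, Finset.sum_range_succ]
  obtain ⟨U, hU⟩ : ∃ U, U = gaussBracket b D := ⟨_, rfl⟩
  rw [← hU] at hbf
  -- facts
  have hval : ∀ x : V, ∑ z, (if G.dist x z = 1 then (1:ℝ) else 0) = U * β := by
    intro x
    have h1 := hdr 0 1 1 (by omega) (by omega) (by omega) x x (by simp)
    have h2 := hbf 0 (by omega)
    rw [ncard_filter] at h1
    rw [← Finset.sum_filter, Finset.sum_const, nsmul_eq_mul, mul_one]
    simp only [zero_add, gb0, sub_zero, mul_zero] at h2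
    rw [← h2, ← h1]
    simp only [and_self]
  have hB : ∀ x y : V, (Nc G x y (G.dist x y + 1) : ℝ)
      = (U - gaussBracket b (G.dist x y)) * (β - α * gaussBracket b (G.dist x y)) := by
    intro x y
    rcases Nat.lt_or_ge (G.dist x y) D with h | h
    · rw [Nc_eq G hdr (by omega) hdiam_le x y _ (by omega), hbf _ h.le]
    · have : G.dist x y = D := le_antisymm (hdiam_le x y) h
      rw [this, ← hU, sub_self, zero_mul]
      norm_cast
      rw [Nc, Finset.card_eq_zero, Finset.filter_eq_empty_iff]
      intro z _ hz
      have := hdiam_le y z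
      omega
  have hC : ∀ x y : V, (((if G.dist x y = 0 then 0 else Nc G x y (G.dist x y - 1) : ℕ)) : ℝ)
      = gaussBracket b (G.dist x y) * (1 + α * gaussBracket b (G.dist x y - 1)) := by
    intro x y
    split_ifs with h
    · rw [h, gb0]; simp
    · have := hdiam_le x y
      rw [Nc_eq G hdr (by omega) hdiam_le x y _ (by omega), hcf _ (hdiam_le x y)]
  have hA : ∀ x y : V, (Nc G x y (G.dist x y) : ℝ) = U * β
      - gaussBracket b (G.dist x y) * (1 + α * gaussBracket b (G.dist x y - 1))
      - (U - gaussBracket b (G.dist x y)) * (β - α * gaussBracket b (G.dist x y)) := by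
    intro x y
    have h1 := sum_nb G hconn 1 x y (fun n => if n = 0 then 0 else Nc G x y (n - 1)) (fun n => rfl)
    simp only [Pi.one_apply, mul_one] at h1
    rw [hval, hB, hC] at h1
    linarith
  have hβ : β = 1 + α - α * U := by
    obtain ⟨x, y, h⟩ := ex_dist G hconn hdiam 1 (by omega)
    have h1 := hA x y
    rw [Nc_eq G hdr (by omega) hdiam_le x y _ (by omega), h, ha1] at h1
    simp [gb0, gb1] at h1
    linarith
  have hA' : ∀ x y : V, (Nc G x y (G.dist x y) : ℝ) =
      α * gaussBracket b (G.dist x y) * (1 - gaussBracket b (G.dist x y)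
        - gaussBracket b (G.dist x y - 1)) := by
    intro x y
    rw [hA, hβ]; ring
  have hpa : ∀ i ≤ D, (p i 1 i : ℝ) = α * gaussBracket b i * (1 - gaussBracket b i
        - gaussBracket b (i - 1)) := by
    intro i hi
    obtain ⟨x, y, h⟩ := ex_dist G hconn hdiam i hi
    have := hA' x y
    rw [Nc_eq G hdr (by omega) hdiam_le x y _ (by omega), h] at this
    exact this
  have hcpos : ∀ i, 1 ≤ i → i ≤ D → 1 ≤ p i 1 (i-1) := by
    intro i h1 hi
    obtain ⟨x, y, h⟩ := ex_dist G hconn hdiam i hi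
    rw [G.dist_comm] at h
    obtain ⟨j, rfl⟩ : ∃ j, i = j + 1 := ⟨i - 1, by omega⟩
    obtain ⟨z, hz, hz'⟩ := pred_dist G hconn h
    rw [G.dist_comm] at h
    have := Nc_eq G hdr (by omega) hdiam_le x y j (by omega)
    rw [h] at this
    rw [Nat.add_sub_cancel, ← this, Nc, Nat.one_le_iff_ne_zero, Finset.card_ne_zero]
    exact ⟨z, by rw [Finset.mem_filter]; exact ⟨Finset.mem_univ _, by rw [G.dist_comm]; exact hz', hz⟩⟩
  have hb : b < -1 := by
    refine b_lt b α (p 2 1 1) (p 3 1 2) (p 4 1 3) (p 2 1 2) (p 3 1 3) hb0 hb1 ?_ ?_ ?_ ?_ ?_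
      (hcpos 2 (by omega) (by omega)) (hcpos 4 (by omega) (by omega)) (by omega)
    · have := hcf 2 (by omega)
      simp only [show 2 - 1 = 1 from rfl, gb1, gb2] at this
      rw [this]; ring
    · have := hcf 3 (by omega)
      simp only [show 3 - 1 = 2 from rfl, gb3, gb2] at this
      rw [this]
    · have := hcf 4 (by omega)
      simp only [show 4 - 1 = 3 from rfl, gb3, gb4] at this
      rw [this]
    · have := hpa 2 (by omega)
      simp only [show 2 - 1 = 1 from rfl, gb1, gb2] at this
      rw [this]; ring
    · have := hpa 3 (by omega)
      simp only [show 3 - 1 = 2 from rfl, gb3, gb2] at this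
      rw [this]; ring
  have hbm : b - 1 ≠ 0 := by linarith
  -- functions
  obtain ⟨u, hu⟩ : ∃ u : ℤ → ℝ, u = fun i => (b ^ i - 1) / (b - 1) := ⟨_, rfl⟩
  obtain ⟨w, hw⟩ : ∃ w : ℤ → ℝ, w = fun i => (b⁻¹) ^ i := ⟨_, rfl⟩
  have hun : ∀ n : ℕ, u n = gaussBracket b n := by
    intro n
    rw [hu, gaussBracket, geom_sum_eq (by linarith)]
    simp
  have hu1 : ∀ i, u (i+1) = 1 + b * u i := by
    intro i
    simp only [hu]
    rw [zpow_add_one₀ hb0]; field_simp; ring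
  have hw1 : ∀ i, w i = b * w (i+1) := by
    intro i
    simp only [hw]
    rw [zpow_add_one₀ (inv_ne_zero hb0)]; field_simp
  have huw : ∀ i, w i * (1 + (b-1) * u i) = 1 := by
    intro i
    simp only [hu, hw]
    rw [mul_div_cancel₀ _ hbm, inv_zpow]
    have : b ^ i ≠ 0 := zpow_ne_zero _ hb0
    field_simp
    try ring
  obtain ⟨c, hc⟩ : ∃ c : ℤ → ℝ, ∀ i, c i = u i * (1 + α * u (i-1)) := ⟨_, fun _ => rfl⟩
  obtain ⟨a, ha⟩ : ∃ c : ℤ → ℝ, ∀ i, c i = α * u i * (1 - u i - u (i-1)) := ⟨_, fun _ => rfl⟩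
  obtain ⟨d, hd⟩ : ∃ c : ℤ → ℝ, ∀ i, c i = (U - u i) * (1 + α - α * U - α * u i) :=
    ⟨_, fun _ => rfl⟩
  have u0 : u 0 = 0 := by simp [hu]
  have hum : ∀ n : ℕ, u n * u ((n:ℤ)-1) = gaussBracket b n * gaussBracket b (n-1) := by
    intro n
    rcases n with _ | n
    · simp [u0, gb0]
    · have := hun n
      rw [hun]; push_cast; rw [add_sub_cancel_right, this]
  have hL : ∀ (φ : ℤ → ℝ) x y, ∑ z, (if G.dist x z = 1 then φ (G.dist z y : ℤ) else 0)
    = Lop c a d φ (G.dist x y : ℤ) := by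
    intro φ x y
    have h1 := sum_nb G hconn φ x y (fun n => if n = 0 then 0 else Nc G x y (n - 1)) (fun n => rfl)
    rw [h1]
    have hm := hum (G.dist x y)
    have e1 : (((if G.dist x y = 0 then 0 else Nc G x y (G.dist x y - 1) : ℕ)) : ℝ)
        = c (G.dist x y) := by
      rw [hC, hc, hun]
      rw [hun] at hm
      linear_combination (-α) * hm
    have e2 : (Nc G x y (G.dist x y) : ℝ) = a (G.dist x y) := by
      rw [hA', ha, hun]
      rw [hun] at hm
      linear_combination α * hm
    have e3 : (Nc G x y (G.dist x y + 1) : ℝ) = d (G.dist x y) := by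
      rw [hB, hd, hun, hβ]
    rw [Lop, ← e1, ← e2, ← e3]
  have h0 : ∀ x y, G.dist x y = 0 ↔ x = y := fun x y => hconn.dist_eq_zero_iff
  have hsym : ∀ x y, G.dist x y = G.dist y x := fun x y => G.dist_comm
  have hcn : ∀ n : ℕ, 1 ≤ n → n ≤ D → c n ≠ 0 := by
    intro n h1 h2
    have h3 := hcpos n h1 h2
    have h4 := hcf n h2
    have hm := hum n
    have : c n = p n 1 (n-1) := by
      rw [h4, hc, hun]
      rw [hun] at hm
      linear_combination α * hm
    rw [this]
    exact_mod_cast (by omega : p n 1 (n-1) ≠ 0)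
  have hF := Fsq G.dist c a d w hsym h0 hL D hdiam_le hcn _ _ (U * (1 + α - α * U))
    (eig_cl b α U hb0 u w hu1 hw1 huw c a d hc ha hd) (by
      intro i
      simp only [Lop, Pi.one_apply, mul_one, hc, ha, hd]
      ring)
  have hs0 : b + 1/b + 1 < 0 := by
    have : 1/b < 0 := one_div_neg.2 (by linarith)
    linarith
  have hT := main_rel G.dist c a d w hsym h0 hL _ _ _ hF
    (tri_cl b α U hb0 u w hu1 hw1 c a d hc ha hd _ _ _ rfl rfl rfl)
  have hCR := CR_ind G.dist c a d w h0 hL (hcn 2 (by omega) (by omega)) (hcn 3 (by omega) (by omega))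
    _ _ _ (by linarith) (by linarith) hT
  refine ⟨b⁻¹, ?_, inv_lt_zero.2 (by linarith), ?_⟩
  · have := inv_mul_cancel₀ hb0
    have h2 : b⁻¹ < 0 := inv_lt_zero.2 (by linarith)
    nlinarith
  · intro i hi
    have h1 : CR G.dist w (RM G.dist (ind i)) := by
      rcases hi with rfl | rfl
      · exact hCR.1
      · exact hCR.2
    obtain ⟨q, hq⟩ := CR_entry G.dist w hsym i h1
    refine ⟨q, fun u x y => ?_⟩
    have := hq u x y
    simpa [hw] using this

end
end NM

namespace NM

set_option linter.unusedSectionVars false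

section
variable {V : Type*} [Fintype V] [DecidableEq V]

def NN (δ : V → V → ℕ) (x y : V) (j : ℕ) : Finset V :=
  Finset.univ.filter fun z => δ x z = 1 ∧ δ y z = j

structure Hyp (δ : V → V → ℕ) (r q2 qA qC : ℝ) (a2 a3 b3 c2 c3 : ℕ) : Prop where
  sym : ∀ x y, δ x y = δ y x
  zero : ∀ x y, δ x y = 0 ↔ x = y
  tri : ∀ x y z, δ x z ≤ δ x y + δ y z
  pred : ∀ x y n, δ x y = n + 1 → ∃ z, δ x z = n ∧ δ z y = 1
  tf : ∀ x y z, δ x y = 1 → δ y z = 1 → δ x z ≠ 1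
  r1 : -1 < r
  r0 : r < 0
  cA2 : ∀ x y, δ x y = 2 → (NN δ x y 2).card = a2
  pA2 : 1 ≤ a2
  cA3 : ∀ x y, δ x y = 3 → (NN δ x y 3).card = a3
  cB3 : ∀ x y, δ x y = 3 → (NN δ x y 4).card = b3
  cC3 : ∀ x y, δ x y = 3 → (NN δ x y 2).card = c3
  pC3 : 1 ≤ c3
  cC2 : ∀ x y, δ x y = 2 → (NN δ x y 1).card = c2
  R2 : ∀ u x y, δ x y = 2 → ∑ z ∈ NN δ x y 2, r ^ δ u z - ∑ z ∈ NN δ y x 2, r ^ δ u z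
    = q2 * (r ^ δ u y - r ^ δ u x)
  RA : ∀ u x y, δ x y = 3 → ∑ z ∈ NN δ x y 3, r ^ δ u z - ∑ z ∈ NN δ y x 3, r ^ δ u z
    = qA * (r ^ δ u y - r ^ δ u x)
  RC : ∀ u x y, δ x y = 3 → ∑ z ∈ NN δ x y 2, r ^ δ u z - ∑ z ∈ NN δ y x 2, r ^ δ u z
    = qC * (r ^ δ u y - r ^ δ u x)

lemma mem_NN {δ : V → V → ℕ} {x y z : V} {j : ℕ} : z ∈ NN δ x y j ↔ δ x z = 1 ∧ δ y z = j := by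
  simp [NN]

lemma sum_all {S : Finset V} {g : V → ℝ} {m : ℝ} (h : ∀ z ∈ S, g z = m) :
    ∑ z ∈ S, g z = S.card * m := by
  rw [Finset.sum_congr rfl h, Finset.sum_const, nsmul_eq_mul]

lemma all_of_ge {S : Finset V} {g : V → ℝ} {m : ℝ} (h : ∀ z ∈ S, m ≤ g z)
    (hs : ∑ z ∈ S, g z ≤ S.card * m) : ∀ z ∈ S, g z = m := by
  have h1 : ∑ z ∈ S, (g z - m) = 0 := by
    refine le_antisymm ?_ (Finset.sum_nonneg fun z hz => sub_nonneg.2 (h z hz))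
    rw [Finset.sum_sub_distrib, Finset.sum_const, nsmul_eq_mul]; linarith
  intro z hz
  have := (Finset.sum_eq_zero_iff_of_nonneg fun z hz => sub_nonneg.2 (h z hz)).1 h1 z hz
  linarith

lemma all_of_le {S : Finset V} {g : V → ℝ} {m : ℝ} (h : ∀ z ∈ S, g z ≤ m)
    (hs : S.card * m ≤ ∑ z ∈ S, g z) : ∀ z ∈ S, g z = m := by
  intro z hz
  have := all_of_ge (S := S) (g := fun z => - g z) (m := -m) (fun z hz => neg_le_neg (h z hz))
    (by rw [Finset.sum_neg_distrib]; linarith) z hz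
  linarith

lemma sum_ge {S : Finset V} {g : V → ℝ} {m : ℝ} (h : ∀ z ∈ S, m ≤ g z) :
    S.card * m ≤ ∑ z ∈ S, g z := by
  rw [← nsmul_eq_mul]; exact Finset.card_nsmul_le_sum _ _ _ h

lemma sum_le {S : Finset V} {g : V → ℝ} {m : ℝ} (h : ∀ z ∈ S, g z ≤ m) :
    ∑ z ∈ S, g z ≤ S.card * m := by
  rw [← nsmul_eq_mul]; exact Finset.sum_le_card_nsmul _ _ _ h

lemma pw {r : ℝ} (h1 : -1 < r) (h0 : r < 0) : r < r^3 ∧ r^3 < 0 ∧ 0 < r^4 ∧ r^4 < r^2 := by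
  have e : 0 < r^2 := by nlinarith
  have e2 : r^2 < 1 := by nlinarith
  refine ⟨?_, ?_, ?_, ?_⟩ <;> nlinarith [mul_pos e e, mul_pos e (sub_pos.2 e2)]

variable {δ : V → V → ℕ} {r q2 qA qC : ℝ} {a2 a3 b3 c2 c3 : ℕ}

namespace Hyp

variable (H : Hyp δ r q2 qA qC a2 a3 b3 c2 c3)
include H

lemma self (x : V) : δ x x = 0 := (H.zero x x).2 rfl

lemma two {x y z : V} (h1 : δ x y = 1) (h2 : δ y z = 1) (hne : x ≠ z) : δ x z = 2 := by
  have := H.tri x y z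
  have := H.tf x y z h1 h2
  have : δ x z ≠ 0 := fun h => hne ((H.zero x z).1 h)
  omega

lemma step {p q : V} (h : δ p q = 1) (x : V) : δ x q ≤ δ x p + 1 ∧ δ x p ≤ δ x q + 1 := by
  have := H.tri x p q
  have := H.tri x q p
  have := H.sym p q
  omega

lemma q2e {x y : V} (h : δ x y = 2) : q2 * (1 + r) = -(a2 * r) := by
  have := H.R2 x x y h
  rw [sum_all (m := r^1) (fun z hz => by rw [(mem_NN.1 hz).1]),
    sum_all (m := r^2) (fun z hz => by rw [(mem_NN.1 hz).2]), H.cA2 x y h,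
    H.cA2 y x (by rw [H.sym, h]), h, H.self] at this
  have h1 : (1 - r) ≠ 0 := by linarith [H.r0]
  apply mul_left_cancel₀ h1
  linear_combination this

lemma qAe {x y : V} (h : δ x y = 3) : qA * (r^3 - 1) = a3 * (r - r^3) := by
  have := H.RA x x y h
  rw [sum_all (m := r^1) (fun z hz => by rw [(mem_NN.1 hz).1]),
    sum_all (m := r^3) (fun z hz => by rw [(mem_NN.1 hz).2]), H.cA3 x y h,
    H.cA3 y x (by rw [H.sym, h]), h, H.self] at this
  linear_combination -this

lemma qCe {x y : V} (h : δ x y = 3) : qC ≠ 0 := by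
  have := H.RC x x y h
  rw [sum_all (m := r^1) (fun z hz => by rw [(mem_NN.1 hz).1]),
    sum_all (m := r^2) (fun z hz => by rw [(mem_NN.1 hz).2]), H.cC3 x y h,
    H.cC3 y x (by rw [H.sym, h]), h, H.self] at this
  rintro rfl
  have h1 : (1:ℝ) ≤ c3 := by exact_mod_cast H.pC3
  have h2 := H.r0
  nlinarith [mul_pos_of_neg_of_neg h2 h2]

lemma P3 {x y z w : V} (hxy : δ x y = 1) (hzw : δ z w = 1) (hxw : δ x w = 3) (hxz : δ x z = 2)
    (hyz : δ y z = 2) (hyw : δ y w = 2) : False := by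
  obtain ⟨p1, p2, p3, p4⟩ := pw H.r1 H.r0
  have e := H.R2 w x z hxz
  have q := H.q2e hxz
  rw [sum_all (S := NN δ z x 2) (m := r^2) (fun g hg => by
      obtain ⟨g1, g2⟩ := mem_NN.1 hg
      rw [H.two (x := w) (y := z) (by rw [H.sym, hzw]) g1 (by rintro rfl; omega)]),
    H.cA2 z x (by rw [H.sym, hxz]), H.sym w z, hzw, H.sym w x, hxw] at e
  have k := all_of_ge (S := NN δ x z 2) (g := fun g => r ^ δ w g) (m := r^3) (by
    intro g hg
    obtain ⟨g1, g2⟩ := mem_NN.1 hg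
    have := H.step g1 w
    have := H.tri w z g
    rw [H.sym w x, H.sym w z] at *
    obtain h | h : δ w g = 2 ∨ δ w g = 3 := by omega
    · simp only [h]; linarith
    · simp only [h]; linarith) (by
    rw [H.cA2 x z hxz]
    apply le_of_eq
    linear_combination e + r * (1 - r) * q) y (mem_NN.2 ⟨hxy, by rw [H.sym, hyz]⟩)
  simp only [H.sym w y, hyw] at k
  linarith

lemma P4 {x y z w : V} (hxy : δ x y = 1) (hzw : δ z w = 1) (hxw : δ x w = 4) (hxz : δ x z = 3)
    (hyz : δ y z = 3) (hyw : δ y w = 3) : False := by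
  obtain ⟨p1, p2, p3, p4⟩ := pw H.r1 H.r0
  have e := H.RA w x z hxz
  have q := H.qAe hxz
  rw [sum_all (S := NN δ z x 3) (m := r^2) (fun g hg => by
      obtain ⟨g1, g2⟩ := mem_NN.1 hg
      rw [H.two (x := w) (y := z) (by rw [H.sym, hzw]) g1 (by rintro rfl; omega)]),
    H.cA3 z x (by rw [H.sym, hxz]), H.sym w z, hzw, H.sym w x, hxw] at e
  have k := all_of_le (S := NN δ x z 3) (g := fun g => r ^ δ w g) (m := r^4) (by
    intro g hg
    obtain ⟨g1, g2⟩ := mem_NN.1 hg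
    have := H.step g1 w
    have := H.tri w z g
    rw [H.sym w x, H.sym w z] at *
    obtain h | h : δ w g = 3 ∨ δ w g = 4 := by omega
    · simp only [h]; linarith
    · simp only [h]; linarith) (by
    rw [H.cA3 x z hxz]
    apply le_of_eq
    linear_combination -e + r * q) y (mem_NN.2 ⟨hxy, by rw [H.sym, hyz]⟩)
  simp only [H.sym w y, hyw] at k
  linarith

/-- same `B` for adjacent vertices in `Γ₂`. -/
lemma F2 {x z z' t : V} (hz : δ x z = 2) (hz' : δ x z' = 2) (hzz : δ z z' = 1) (ht : δ x t = 1)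
    (h : δ z t = 3) : δ z' t = 3 := by
  have h1 := H.tri z' x t
  have h2 := H.tri z z' t
  rw [H.sym z' x] at h1
  by_contra hne
  have h3 : δ z' t = 2 := by omega
  exact H.P3 (x := t) (y := x) (z := z') (w := z) (by rw [H.sym, ht]) (by rw [H.sym, hzz])
    (by rw [H.sym, h]) (by rw [H.sym, h3]) hz' hz

lemma F3 {x z z' t : V} (hz : δ x z = 3) (hz' : δ x z' = 3) (hzz : δ z z' = 1) (ht : δ x t = 1)
    (h : δ z t = 4) : δ z' t = 4 := by
  have h1 := H.tri z' x t
  have h2 := H.tri z z' t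
  rw [H.sym z' x] at h1
  by_contra hne
  have h3 : δ z' t = 3 := by omega
  exact H.P4 (x := t) (y := x) (z := z') (w := z) (by rw [H.sym, ht]) (by rw [H.sym, hzz])
    (by rw [H.sym, h]) (by rw [H.sym, h3]) hz' hz

lemma B3eq {x y z : V} (hy : δ x y = 3) (hz : δ x z = 3)
    (h : ∀ t, δ x t = 1 → δ y t = 4 → δ z t = 4) : NN δ x y 4 = NN δ x z 4 := by
  apply Finset.eq_of_subset_of_card_le
  · intro t ht
    obtain ⟨h1, h2⟩ := mem_NN.1 ht
    exact mem_NN.2 ⟨h1, h t h1 h2⟩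
  · rw [H.cB3 x y hy, H.cB3 x z hz]

lemma G24 {x v w : V} (hvw : δ v w = 2) (hv : δ x v = 2) (hw : δ x w = 4) {g : V}
    (hg1 : δ w g = 1) (hg2 : δ v g = 2) : δ x g = 4 := by
  obtain ⟨p1, p2, p3, p4⟩ := pw H.r1 H.r0
  have e := H.R2 x v w hvw
  have q := H.q2e hvw
  have wv : δ w v = 2 := by rw [H.sym, hvw]
  rw [hv, hw] at e
  have k1 := sum_ge (S := NN δ v w 2) (g := fun g => r ^ δ x g) (m := r^3) (by
    intro g hg
    obtain ⟨g1, g2⟩ := mem_NN.1 hg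
    have := H.step g1 x
    have := H.tri x g w
    rw [H.sym g w] at *
    obtain h | h : δ x g = 2 ∨ δ x g = 3 := by omega
    · simp only [h]; linarith
    · simp only [h]; linarith)
  rw [H.cA2 v w hvw] at k1
  have k2 := all_of_le (S := NN δ w v 2) (g := fun g => r ^ δ x g) (m := r^4) (by
    intro g hg
    obtain ⟨g1, g2⟩ := mem_NN.1 hg
    have := H.step g1 x
    have := H.tri x v g
    obtain h | h : δ x g = 3 ∨ δ x g = 4 := by omega
    · simp only [h]; linarith
    · simp only [h]; linarith) (by
    rw [H.cA2 w v wv]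
    have : (q2 * (r^4 - r^2)) = a2 * r^3 - a2 * r^4 := by
      linear_combination (- r^2 * (1 - r)) * q
    linarith) g (mem_NN.2 ⟨hg1, hg2⟩)
  have := H.step hg1 x
  have := H.tri x v g
  obtain h | h : δ x g = 3 ∨ δ x g = 4 := by omega
  · simp only [h] at k2; linarith
  · exact h

/-- `A(y,v) ∩ Γ₄(x) = ∅` -/
lemma no4 {x v y w : V} (hv : δ x v = 2) (hy : δ x y = 3) (hvy : δ v y = 2) (h1 : δ y w = 1)
    (h2 : δ v w = 2) : δ x w ≠ 4 := by
  intro h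
  have := H.G24 (x := x) (v := v) (w := w) (g := y) h2 hv h (by rw [H.sym, h1]) hvy
  omega

lemma lemHaux {x v y g t : V} (hv : δ x v = 2) (hy : δ x y = 3) (hvy : δ v y = 2)
    (hg1 : δ v g = 1) (hg2 : δ y g = 2) (hg : δ x g = 3) (ht : δ x t = 1) (hty : δ y t = 4)
    (h : δ t g = 2) : False := by
  obtain ⟨p1, p2, p3, p4⟩ := pw H.r1 H.r0
  have gy : δ g y = 2 := by rw [H.sym, hg2]
  have ty : δ t y = 4 := by rw [H.sym, hty]
  have e := H.R2 x g y gy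
  rw [hg, hy, sub_self, mul_zero, sum_all (S := NN δ y g 2) (m := r^3) (fun w hw => by
      obtain ⟨w1, w2⟩ := mem_NN.1 hw
      have k1 := H.G24 (x := t) (v := g) (w := y) (g := w) gy h ty w1 w2
      have k2 := H.step ht w
      have k3 := H.step w1 x
      rw [H.sym w x, H.sym w t] at k2
      have k4 : δ x w ≠ 4 := by
        intro h4
        have k5 := H.tri x v w
        have k6 := H.tri v g w
        obtain k7 | k7 : δ v w = 2 ∨ δ v w = 3 := by omega
        · exact H.no4 hv hy hvy w1 k7 h4
        · exact H.P3 hg1 w1 k7 hvy gy w2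
      rw [show δ x w = 3 by omega]), H.cA2 y g hg2] at e
  have k := all_of_ge (S := NN δ g y 2) (g := fun g => r ^ δ x g) (m := r^3) (by
    intro w hw
    obtain ⟨w1, w2⟩ := mem_NN.1 hw
    have := H.step w1 x
    obtain h | h | h : δ x w = 2 ∨ δ x w = 3 ∨ δ x w = 4 := by omega
    all_goals simp only [h]; linarith) (by rw [H.cA2 g y gy]; linarith) v
    (mem_NN.2 ⟨by rw [H.sym, hg1], by rw [H.sym, hvy]⟩)
  simp only [hv] at k
  linarith

lemma lemH {x v y g : V} (hv : δ x v = 2) (hy : δ x y = 3) (hvy : δ v y = 2)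
    (hB : ∀ t, δ x t = 1 → δ y t = 4 → δ v t = 3)
    (hg1 : δ v g = 1) (hg2 : δ y g = 2) (hg : δ x g = 3) : NN δ x y 4 = NN δ x g 4 := by
  apply H.B3eq hy hg
  intro t ht hty
  obtain ⟨p1, p2, p3, p4⟩ := pw H.r1 H.r0
  have hvt := hB t ht hty
  have e1 := H.R2 t v y hvy
  have e2 := H.R2 x v y hvy
  have yv : δ y v = 2 := by rw [H.sym, hvy]
  rw [H.sym t y, H.sym t v, hvt, hty] at e1
  rw [hv, hy] at e2
  have e3 : ∑ z ∈ NN δ v y 2, (r ^ δ t z - r * r ^ δ x z)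
      - ∑ z ∈ NN δ y v 2, (r ^ δ t z - r * r ^ δ x z) = 0 := by
    rw [Finset.sum_sub_distrib, Finset.sum_sub_distrib, ← Finset.mul_sum, ← Finset.mul_sum]
    linear_combination e1 - r * e2
  rw [sum_all (S := NN δ y v 2) (m := 0) (fun w hw => by
    obtain ⟨w1, w2⟩ := mem_NN.1 hw
    have k1 := H.step w1 x
    have k2 := H.no4 hv hy hvy w1 w2
    obtain k | k : δ x w = 2 ∨ δ x w = 3 := by omega
    · have k3 := H.step w1 t
      have k4 := H.step ht w
      rw [H.sym w x, H.sym w t] at k4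
      rw [H.sym t y] at k3
      rw [show δ t w = 3 by omega, k]; ring
    · have := H.F3 hy k w1 ht hty
      rw [H.sym t w, this, k]; ring), mul_zero, sub_zero] at e3
  have key := all_of_le (S := NN δ v y 2) (g := fun z => r ^ δ t z - r * r ^ δ x z) (m := 0) (by
    intro w hw
    obtain ⟨w1, w2⟩ := mem_NN.1 hw
    have k1 := H.step w1 x
    have k3 := H.step w1 t
    have k4 := H.step ht w
    rw [H.sym w x, H.sym w t] at k4
    rw [H.sym t v] at k3
    obtain k | k | k : δ x w = 1 ∨ δ x w = 2 ∨ δ x w = 3 := by omega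
    · simp only [k, show δ t w = 2 by omega]; apply le_of_eq; ring
    · have := H.F2 hv k w1 ht hvt
      simp only [k, H.sym t w, this]; apply le_of_eq; ring
    · have k5 : δ t w ≠ 2 := fun h => H.lemHaux hv hy hvy w1 w2 k ht hty h
      obtain k6 | k6 : δ t w = 3 ∨ δ t w = 4 := by omega
      · simp only [k, k6]; nlinarith
      · simp only [k, k6]; apply le_of_eq; ring) (by rw [mul_zero]; exact e3.ge) g
    (mem_NN.2 ⟨hg1, hg2⟩)
  have k3 := H.step hg1 t
  have k4 := H.step ht g
  rw [H.sym g x, H.sym g t] at k4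
  rw [H.sym t v] at k3
  have k5 : δ t g ≠ 2 := fun h => H.lemHaux hv hy hvy hg1 hg2 hg ht hty h
  obtain k6 | k6 : δ t g = 3 ∨ δ t g = 4 := by omega
  · simp only [hg, k6] at key; nlinarith
  · rw [H.sym, k6]

end Hyp
end
end NM

namespace NM

section
variable {V : Type*} [Fintype V] [DecidableEq V]

def InC (δ : V → V → ℕ) (x y z : V) : Prop := δ x z = 3 ∧ NN δ x z 4 = NN δ x y 4

def InD (δ : V → V → ℕ) (x y v : V) : Prop := ∃ z, InC δ x y z ∧ δ x v + δ v z = 3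

variable {δ : V → V → ℕ} {r q2 qA qC : ℝ} {a2 a3 b3 c2 c3 : ℕ}

namespace Hyp

variable (H : Hyp δ r q2 qA qC a2 a3 b3 c2 c3)
include H

lemma C_nb {x y z z' : V} (hz : InC δ x y z) (hz' : δ x z' = 3) (h : δ z z' = 1) :
    InC δ x y z' :=
  ⟨hz', by rw [← hz.2]; exact (H.B3eq hz.1 hz' fun t h1 h2 => H.F3 hz.1 hz' h h1 h2).symm⟩

lemma C_D {x y z : V} (hz : InC δ x y z) : InD δ x y z := ⟨z, hz, by rw [hz.1, H.self]⟩

lemma D3 {x y v : V} (h : InD δ x y v) (h3 : δ x v = 3) : InC δ x y v := by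
  obtain ⟨z, hz, e⟩ := h
  have : v = z := (H.zero _ _).1 (by omega)
  rw [this]; exact hz

lemma sub32 {x v y t : V} (hv : δ x v = 2) (hvy : δ v y = 1) (ht : δ x t = 1) (h : δ y t = 4) :
    δ v t = 3 := by
  have h1 := H.tri v x t
  have h2 := H.tri y v t
  rw [H.sym v x] at h1
  rw [H.sym y v] at h2
  omega

lemma K {x y v v' : V} (hD : InD δ x y v') (hv' : δ x v' = 2) (hv : δ x v = 2)
    (hvv : δ v v' = 1) : InD δ x y v := by
  obtain ⟨p1, p2, p3, p4⟩ := pw H.r1 H.r0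
  obtain ⟨y', hC, e⟩ := hD
  have h1 : δ v' y' = 1 := by omega
  have hy' := hC.1
  have vy : δ v y' = 2 := H.two hvv h1 (by rintro rfl; omega)
  have yv : δ y' v = 2 := by rw [H.sym, vy]
  have hB : ∀ t, δ x t = 1 → δ y' t = 4 → δ v t = 3 := fun t ht h =>
    H.F2 hv' hv (by rw [H.sym, hvv]) ht (H.sub32 hv' h1 ht h)
  have hex : ∃ g, δ v g = 1 ∧ δ y' g = 2 ∧ δ x g = 3 := by
    by_contra hcon
    have e := H.R2 x v y' vy
    rw [hv, hy', sum_all (S := NN δ v y' 2) (m := r^2) (fun g hg => by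
      obtain ⟨g1, g2⟩ := mem_NN.1 hg
      have k1 := H.step g1 x
      have k2 : δ x g ≠ 3 := fun h => hcon ⟨g, g1, g2, h⟩
      have k3 : δ x g ≠ 1 := fun h => H.P3 h h1 hy' hv'
        (H.two (by rw [H.sym, g1]) hvv (by rintro rfl; omega)) (by rw [H.sym, g2])
      rw [show δ x g = 2 by omega]), H.cA2 v y' vy] at e
    have k := sum_le (S := NN δ y' v 2) (g := fun g => r ^ δ x g) (m := r^2) (by
      intro g hg
      obtain ⟨g1, g2⟩ := mem_NN.1 hg
      have := H.step g1 x
      obtain h | h | h : δ x g = 2 ∨ δ x g = 3 ∨ δ x g = 4 := by omega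
      all_goals simp only [h]; linarith)
    rw [H.cA2 y' v yv] at k
    have q := H.q2e vy
    have hq : 0 < q2 := by
      have : (1:ℝ) ≤ a2 := by exact_mod_cast H.pA2
      by_contra hn
      push Not at hn
      nlinarith [H.r0, H.r1, mul_nonneg (neg_nonneg.2 hn) (show 0 ≤ 1 + r by linarith [H.r1])]
    have : 0 < q2 * (r^2 - r^3) := mul_pos hq (by linarith)
    linarith
  obtain ⟨g, g1, g2, g3⟩ := hex
  have := H.lemH hv hy' vy hB g1 g2 g3
  exact ⟨g, ⟨g3, by rw [← this, hC.2]⟩, by omega⟩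

lemma L1 {x y s y' : V} (hs : δ x s = 1) (hC : InC δ x y y') (h : δ s y' ≤ 3) : InD δ x y s := by
  obtain ⟨p1, p2, p3, p4⟩ := pw H.r1 H.r0
  have hy' := hC.1
  have h2 := H.tri x s y'
  obtain h3 | h3 : δ s y' = 2 ∨ δ s y' = 3 := by omega
  · exact ⟨y', hC, by omega⟩
  have ys : δ y' s = 3 := by rw [H.sym, h3]
  have yx : δ y' x = 3 := by rw [H.sym, hy']
  by_cases hex : ∃ z', δ y' z' = 1 ∧ δ s z' = 2 ∧ δ x z' = 3
  · obtain ⟨z', e1, e2, e3⟩ := hex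
    exact ⟨z', H.C_nb hC e3 e1, by omega⟩
  · exfalso
    have hsub : NN δ y' s 2 = NN δ y' x 2 := by
      apply Finset.eq_of_subset_of_card_le
      · intro z' hz
        obtain ⟨e1, e2⟩ := mem_NN.1 hz
        refine mem_NN.2 ⟨e1, ?_⟩
        have k1 := H.step e1 x
        have k2 := H.tri x s z'
        have k3 : δ x z' ≠ 3 := fun h => hex ⟨z', e1, e2, h⟩
        omega
      · rw [H.cC3 y' s ys, H.cC3 y' x yx]
    have e := H.RC s x y' hy'
    rw [← hsub, sum_all (S := NN δ y' s 2) (m := r^2) (fun z hz => by rw [(mem_NN.1 hz).2]),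
      H.cC3 y' s ys, sum_all (S := NN δ x y' 2) (m := r^2) (fun z hz => by
        obtain ⟨e1, e2⟩ := mem_NN.1 hz
        rw [H.two (x := s) (y := x) (by rw [H.sym, hs]) e1 (by rintro rfl; omega)]),
      H.cC3 x y' hy', sub_self, h3, H.sym s x, hs] at e
    rcases mul_eq_zero.1 e.symm with h | h
    · exact H.qCe hy' h
    · rw [pow_one] at h; linarith

lemma LS {x t ζ σ : V} (hxt : δ x t = 1) (hxz : δ x ζ = 2) (htz : δ t ζ = 2) (hts : δ t σ = 1)
    (hsz : δ σ ζ = 2) (hxs : δ x σ = 2) : ∃ w, δ x w = 2 ∧ δ w σ = 1 ∧ δ w ζ = 1 := by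
  by_contra hcon
  have hsub : NN δ σ ζ 1 = NN δ σ x 1 := by
    apply Finset.eq_of_subset_of_card_le
    · intro w hw
      obtain ⟨e1, e2⟩ := mem_NN.1 hw
      refine mem_NN.2 ⟨e1, ?_⟩
      have k1 := H.step e1 x
      have k2 : δ x w ≠ 2 := fun h => hcon ⟨w, h, by rw [H.sym, e1], by rw [H.sym, e2]⟩
      have k3 : δ x w ≠ 3 := fun h => H.P3 hxt e2 h hxz htz (H.two hts e1 (by
        rintro rfl
        rw [H.sym] at e2
        omega))
      omega
    · rw [H.cC2 σ ζ hsz, H.cC2 σ x (by rw [H.sym, hxs])]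
  have : t ∈ NN δ σ ζ 1 := by
    rw [hsub]; exact mem_NN.2 ⟨by rw [H.sym, hts], hxt⟩
  have := (mem_NN.1 this).2
  rw [H.sym] at this
  omega

lemma main0 {x y x1 s z : V} (h1 : δ x x1 = 1) (hs : δ x s = 1) (hsD : ¬ InD δ x y s)
    (hz : δ x1 z = 1) (hsz : δ s z = 2) (hzD : InD δ x y z) : False := by
  have h2 : δ x z = 2 := H.two h1 hz (by rintro rfl; rw [H.sym] at hs; omega)
  obtain ⟨y', hC, e⟩ := hzD
  have := H.tri s z y'
  exact hsD (H.L1 hs hC (by omega))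

lemma main1 {x y x1 x2 s z : V} (hxD : InD δ x y x) (h1 : δ x x1 = 1) (h12 : δ x1 x2 = 1)
    (h2 : δ x x2 = 2) (h2D : InD δ x y x2) (hs : δ x1 s = 1) (hsD : ¬ InD δ x y s)
    (hz : δ x2 z = 1) (hsz : δ s z = 2) (hzD : InD δ x y z) : False := by
  apply hsD
  have hxs : δ x s = 2 := H.two h1 hs (by rintro rfl; exact hsD hxD)
  have h1z : δ x1 z = 2 := H.two h12 hz (by rintro rfl; rw [H.sym] at hs; omega)
  have k1 := H.step hz x
  obtain k | k | k : δ x z = 1 ∨ δ x z = 2 ∨ δ x z = 3 := by omega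
  · obtain ⟨z', hz'⟩ : (NN δ x2 x 2).Nonempty := by
      rw [← Finset.card_pos, H.cA2 x2 x (by rw [H.sym, h2])]
      exact H.pA2
    obtain ⟨e1, e2⟩ := mem_NN.1 hz'
    have hz'D : InD δ x y z' := H.K h2D h2 e2 (by rw [H.sym, e1])
    have hne : z ≠ z' := by rintro rfl; omega
    have h1z' : δ x1 z' = 2 := H.two h12 e1 (by rintro rfl; omega)
    obtain ⟨w, w1, w2, w3⟩ := H.LS (x := x1) (t := x) (ζ := z') (σ := z) (by rw [H.sym, h1]) h1z'
      e2 k (H.two (by rw [H.sym, hz]) e1 hne) h1z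
    have hn3 : δ z' s ≠ 3 := by
      intro h
      have f1 := H.F2 h1z' w1 (by rw [H.sym, w3]) hs h
      have f2 := H.F2 w1 h1z w2 hs f1
      rw [H.sym] at f2
      omega
    have := H.tri z' x1 s
    rw [H.sym z' x1] at this
    obtain j | j | j : δ z' s = 0 ∨ δ z' s = 1 ∨ δ z' s = 2 := by omega
    · rw [← (H.zero _ _).1 j]; exact hz'D
    · exact H.K hz'D e2 hxs (by rw [H.sym, j])
    · obtain ⟨w, w1, w2, w3⟩ := H.LS h1 e2 h1z' hs (by rw [H.sym, j]) hxs
      exact H.K (H.K hz'D e2 w1 w3) w1 hxs (by rw [H.sym, w2])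
  · obtain ⟨w, w1, w2, w3⟩ := H.LS h1 k h1z hs hsz hxs
    exact H.K (H.K hzD k w1 w3) w1 hxs (by rw [H.sym, w2])
  · have hC := H.D3 hzD k
    obtain ⟨w, w1, w2⟩ := H.pred s z 1 hsz
    have j1 := H.step w2 x
    have j2 := H.step w1 x
    have j3 : δ x w ≠ 2 := fun h => H.P3 h1 w2 k h
      (H.two hs w1 (by rintro rfl; omega)) h1z
    exact ⟨w, H.C_nb hC (by omega) (by rw [H.sym, w2]), by omega⟩

lemma main2 {x y x2 x3 s z : V} (h2 : δ x x2 = 2) (h23 : δ x2 x3 = 1) (h2D : InD δ x y x2)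
    (hC : InC δ x y x3) (hs : δ x2 s = 1) (hsD : ¬ InD δ x y s)
    (hz : δ x3 z = 1) (hsz : δ s z = 2) (hzD : InD δ x y z) : False := by
  have h3 := hC.1
  have hs3 : δ s x3 = 2 := H.two (by rw [H.sym, hs]) h23 (by rintro rfl; exact hsD (H.C_D hC))
  have k1 := H.step hs x
  obtain k | k | k : δ x s = 1 ∨ δ x s = 2 ∨ δ x s = 3 := by omega
  · exact hsD ⟨x3, hC, by omega⟩
  · exact hsD (H.K h2D h2 k (by rw [H.sym, hs]))
  · apply hsD
    apply H.C_D
    have j1 := H.step hz x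
    have j2 : δ x z ≤ 3 := by obtain ⟨c, _, e⟩ := hzD; omega
    obtain j | j : δ x z = 2 ∨ δ x z = 3 := by omega
    · have hB : ∀ t, δ x t = 1 → δ s t = 4 → δ z t = 3 := by
        intro t ht hst
        obtain ⟨w, w1, w2⟩ := H.pred s z 1 hsz
        have l1 := H.step w1 x
        have l2 := H.step w2 x
        obtain l | l : δ x w = 2 ∨ δ x w = 3 := by omega
        · exact H.F2 l j w2 ht (H.sub32 l (by rw [H.sym, w1]) ht hst)
        · exact H.sub32 j (by rw [H.sym, w2]) ht (H.F3 k l w1 ht hst)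
      have := H.lemH (v := z) (y := s) (g := x3) j k (by rw [H.sym, hsz]) hB (by rw [H.sym, hz])
        hs3 h3
      exact ⟨k, by rw [this, hC.2]⟩
    · have hzC := H.D3 hzD j
      have h2z : δ x2 z = 2 := H.two h23 hz (by rintro rfl; omega)
      have := H.lemH (v := x2) (y := z) (g := s) h2 j h2z (by
        intro t ht hzt
        have : t ∈ NN δ x x3 4 := by
          rw [hC.2, ← hzC.2]; exact mem_NN.2 ⟨ht, hzt⟩
        exact H.sub32 h2 h23 ht (mem_NN.1 this).2) hs (by rw [H.sym, hsz]) k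
      exact ⟨k, by rw [← this, hzC.2]⟩

end Hyp
end
end NM

/-- Classical parameters `(D, b, α, β)`, `D ≥ 4`, `a₁ = 0`, `a₂ ≠ 0`,
`∂(x,y) = 3`, `Δ = [x, C]`. Let `x = x₀, x₁, x₂, x₃` be a sequence of vertices in `Δ`
with `∂(x, x_j) = j` and `∂(x_{j-1}, x_j) = 1` for `1 ≤ j ≤ 3`. Then for `0 ≤ i ≤ 2`,
if `s` is a neighbor of `x_i` with `s ∉ Δ` and `z ∈ A(x_{i+1}, s)` (i.e. `z` is a
neighbor of `x_{i+1}` with `∂(s,z) = 2`), then `z ∉ Δ`. -/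
theorem not_mem_Delta_step [Fintype V] (G : SimpleGraph V) (hconn : G.Connected)
    (D : ℕ) (hD : 4 ≤ D)
    (hdiam_le : ∀ x y : V, G.dist x y ≤ D) (hdiam : ∃ x y : V, G.dist x y = D)
    (p : ℕ → ℕ → ℕ → ℕ) (hdr : G.IsDistRegularWith D p)
    (b α β : ℝ) (hcp : HasClassicalParams D p b α β)
    (ha1 : p 1 1 1 = 0) (ha2 : p 2 1 2 ≠ 0)
    (x y : V) (hxy : G.dist x y = 3)
    (xs : ℕ → V) (hxs0 : xs 0 = x)
    (hxsΔ : ∀ j ≤ 3, xs j ∈ Delta G x y)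
    (hxsd : ∀ j ≤ 3, G.dist x (xs j) = j)
    (hxsadj : ∀ j, 1 ≤ j → j ≤ 3 → G.dist (xs (j - 1)) (xs j) = 1) :
    ∀ i ≤ 2, ∀ s : V, G.dist (xs i) s = 1 → s ∉ Delta G x y →
      ∀ z : V, G.dist (xs (i + 1)) z = 1 → G.dist s z = 2 → z ∉ Delta G x y := by
  classical
  obtain ⟨r, hr1, hr0, hR⟩ := NM.core G hconn D hD hdiam_le hdiam p hdr b α β hcp ha1 ha2
  obtain ⟨f2, hf2⟩ := hR 2 (Or.inl rfl)
  obtain ⟨f3, hf3⟩ := hR 3 (Or.inr rfl)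
  have hcard : ∀ n j : ℕ, n ≤ D → j ≤ D → ∀ x y : V, G.dist x y = n →
      (NM.NN G.dist x y j).card = p n 1 j := by
    intro n j _ hj x y h
    have := NM.Nc_eq G hdr (by omega) hdiam_le x y j hj
    rw [h] at this
    exact this
  have hc3 : 1 ≤ p 3 1 2 := by
    have h := hxy
    rw [G.dist_comm] at h
    obtain ⟨z, hz, hz'⟩ := NM.pred_dist G hconn h
    rw [← hcard 3 2 (by omega) (by omega) x y hxy, Nat.one_le_iff_ne_zero, Finset.card_ne_zero]
    exact ⟨z, NM.mem_NN.2 ⟨by rw [G.dist_comm]; exact hz', hz⟩⟩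
  have H : NM.Hyp G.dist r (f2 2) (f3 3) (f2 3) (p 2 1 2) (p 3 1 3) (p 3 1 4) (p 2 1 1)
      (p 3 1 2) := by
    refine ⟨fun x y => G.dist_comm, fun x y => hconn.dist_eq_zero_iff,
      fun x y z => hconn.dist_triangle, fun x y n h => NM.pred_dist G hconn h, ?_, hr1, hr0,
      hcard 2 2 (by omega) (by omega), by omega, hcard 3 3 (by omega) (by omega),
      hcard 3 4 (by omega) (by omega), hcard 3 2 (by omega) (by omega), hc3,
      hcard 2 1 (by omega) (by omega), ?_, ?_, ?_⟩
    · intro x y z h1 h2 h3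
      have h := hcard 1 1 (by omega) (by omega) x y h1
      rw [ha1, Finset.card_eq_zero] at h
      have : z ∈ NM.NN G.dist x y 1 := NM.mem_NN.2 ⟨h3, h2⟩
      rw [h] at this
      exact absurd this (Finset.notMem_empty _)
    · intro u x y h
      have := hf2 u x y
      rw [h] at this
      rw [NM.NN, NM.NN, Finset.sum_filter, Finset.sum_filter]
      exact this
    · intro u x y h
      have := hf3 u x y
      rw [h] at this
      rw [NM.NN, NM.NN, Finset.sum_filter, Finset.sum_filter]
      exact this
    · intro u x y h
      have := hf2 u x y
      rw [h] at this
      rw [NM.NN, NM.NN, Finset.sum_filter, Finset.sum_filter]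
      exact this
  have hBs : ∀ z, G.dist x z = 3 → (Bset G x z : Set V) = (NM.NN G.dist x z 4 : Finset V) := by
    intro z hz
    ext t
    rw [Finset.mem_coe, NM.mem_NN, Bset, Set.mem_setOf_eq, hz]
  have hCiff : ∀ z, z ∈ Cclass G x y ↔ NM.InC G.dist x y z := by
    intro z
    rw [Cclass, Set.mem_setOf_eq, NM.InC]
    constructor
    · rintro ⟨h1, h2⟩
      rw [hBs z h1, hBs y hxy] at h2
      exact ⟨h1, Finset.coe_injective h2⟩
    · rintro ⟨h1, h2⟩
      refine ⟨h1, ?_⟩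
      rw [hBs z h1, hBs y hxy, h2]
  have hDiff : ∀ v, v ∈ Delta G x y ↔ NM.InD G.dist x y v := by
    intro v
    rw [Delta, Set.mem_setOf_eq, NM.InD]
    refine exists_congr fun z => ?_
    rw [hCiff]
    refine and_congr_right fun h => ?_
    rw [h.1]
  intro i hi s hs hsD z hz hsz hzD
  rw [hDiff] at hsD hzD
  have d1 := hxsd 1 (by omega)
  have d2 := hxsd 2 (by omega)
  have d3 := hxsd 3 (by omega)
  have e2 := hxsadj 2 (by omega) (by omega)
  have e3 := hxsadj 3 (by omega) (by omega)
  have m0 := (hDiff _).1 (hxsΔ 0 (by omega))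
  have m2 := (hDiff _).1 (hxsΔ 2 (by omega))
  have m3 := (hDiff _).1 (hxsΔ 3 (by omega))
  rw [hxs0] at m0
  obtain rfl | rfl | rfl : i = 0 ∨ i = 1 ∨ i = 2 := by omega
  · rw [hxs0] at hs
    exact H.main0 d1 hs hsD hz hsz hzD
  · exact H.main1 m0 d1 e2 d2 m2 hs hsD hz hsz hzD
  · exact H.main2 d2 e3 m2 (H.D3 m3 d3) hs hsD hz hsz hzD
end
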